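/- arXiv:2104.06302 — 3 statements merged into one kernel-verified Lean document; each statement's English description precedes it below -/
import Mathlib

section
/- Let σ be a saturation function and V₀(z,y) = ‖y‖² + ∫₀^{‖z‖} S(ξ)dξ + ∫₀^{‖z−y‖} S(ξ)dξ. There exist ε₀>0 and R>0 such that for every ε∈(0,ε₀) and every (z₀,y₀)∈ℝ²×ℝ², there exists a time T₁(z₀,y₀)≥0 such that the solution (z(t),y(t)) of (T_ε) with (z(0),y(0))=(z₀,y₀) satisfies V₀(z(t),y(t)) ≤ 2R for all t ≥ T₁(z₀,y₀). -/
open Real Filter MeasureTheory intervalIntegral RealInnerProductSpace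

noncomputable section

/-- A saturation function: odd, globally Lipschitz, sign-definite, with finite positive limits
of `σ` at `+∞` and of `σ ξ / ξ` at `0`, non-decreasing, differentiable on `(0,∞)` with
non-increasing derivative there. -/
def IsSaturation (σ : ℝ → ℝ) : Prop :=
  (∀ ξ, σ (-ξ) = -σ ξ) ∧
  (∃ L : NNReal, LipschitzWith L σ) ∧
  (∀ ξ : ℝ, ξ ≠ 0 → σ ξ * ξ > 0) ∧
  (∃ l > 0, Tendsto σ atTop (nhds l)) ∧
  (∃ l > 0, Tendsto (fun ξ => σ ξ / ξ) (nhdsWithin 0 {(0:ℝ)}ᶜ) (nhds l)) ∧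
  Monotone σ ∧
  DifferentiableOn ℝ σ (Set.Ioi 0) ∧
  AntitoneOn (deriv σ) (Set.Ioi 0)

/-- The modified saturation function `S` associated with `σ`:
`S ξ = (2/π) ∫_0^{π/2} sin v · σ(ξ sin v) dv`. -/
def modSat (σ : ℝ → ℝ) (ξ : ℝ) : ℝ :=
  (2 / Real.pi) * ∫ v in (0:ℝ)..(Real.pi / 2), Real.sin v * σ (ξ * Real.sin v)

abbrev E2 := EuclideanSpace ℝ (Fin 2)

open Classical in
/-- The radial vector field `f(z) = S(‖z‖) z / ‖z‖`, `f(0) = 0`. -/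
def fvec (σ : ℝ → ℝ) (z : E2) : E2 :=
  if z = 0 then 0 else (modSat σ ‖z‖ / ‖z‖) • z

/-- `b_ε(t) = R_{-2πt/ε} e₂ = (sin(2πt/ε), cos(2πt/ε))`. -/
def bvp (ε t : ℝ) : E2 :=
  (WithLp.equiv 2 (Fin 2 → ℝ)).symm ![Real.sin (2 * Real.pi * t / ε), Real.cos (2 * Real.pi * t / ε)]

/-- The Lyapunov function `V₀(z,y) = ‖y‖² + ∫₀^{‖z‖} S + ∫₀^{‖z-y‖} S`. -/
def V0 (σ : ℝ → ℝ) (z y : E2) : ℝ :=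
  ‖y‖ ^ 2 + (∫ ξ in (0:ℝ)..‖z‖, modSat σ ξ) + ∫ ξ in (0:ℝ)..‖z - y‖, modSat σ ξ

/-- `(z, y)` solves the time-varying system `(T_ε)`:
`ż = y - b_ε(t) σ(b_ε(t)ᵀ z)`, `ẏ = - b_ε(t) σ(b_ε(t)ᵀ z)`, for `t ≥ 0`. -/
def IsSolTeps (σ : ℝ → ℝ) (ε : ℝ) (z y : ℝ → E2) : Prop :=
  ∀ t : ℝ, 0 ≤ t →
    HasDerivAt z (y t - σ ⟪bvp ε t, z t⟫ • bvp ε t) t ∧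
    HasDerivAt y (-(σ ⟪bvp ε t, z t⟫) • bvp ε t) t


structure SatF (σ : ℝ → ℝ) (L M : ℝ) : Prop where
  odd : ∀ a, σ (-a) = -σ a
  lip : ∀ a b, |σ a - σ b| ≤ L * |a - b|
  bound : ∀ a, |σ a| ≤ M
  mono : Monotone σ
  diff : ∀ a, HasDerivAt σ (deriv σ a) a
  d0 : ∀ a, 0 ≤ deriv σ a
  dL : ∀ a, deriv σ a ≤ L
  pos : ∀ a, 0 < a → 0 < σ a
  zero : σ 0 = 0
  Lpos : 0 < L
  Mpos : 0 < M
  cont : Continuous σ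

lemma IsSaturation.satF {σ : ℝ → ℝ} (h : IsSaturation σ) : ∃ L M, SatF σ L M := by
  obtain ⟨hodd, ⟨L, hL⟩, hpos, ⟨l, hl, hlim⟩, ⟨l', hl', hlim'⟩, hmono, hdiff, -⟩ := h
  have hzero : σ 0 = 0 := by have := hodd 0; simp at this; linarith
  have hle : ∀ a, σ a ≤ l := fun a => hmono.ge_of_tendsto hlim a
  have hd : ∀ a, DifferentiableAt ℝ σ a := by
    intro a
    rcases lt_trichotomy a 0 with ha | ha | ha
    · have h1 : DifferentiableAt ℝ σ (-a) :=
        (hdiff (-a) (by simpa using ha)).differentiableAt (Ioi_mem_nhds (by simpa using ha))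
      have h2 : DifferentiableAt ℝ (fun x => - σ (-x)) a :=
        (DifferentiableAt.comp a h1 differentiableAt_id.neg).neg
      have : (fun x => - σ (-x)) = σ := by funext x; rw [hodd]; simp
      rwa [this] at h2
    · subst ha
      have : HasDerivAt σ l' 0 := by
        rw [hasDerivAt_iff_tendsto_slope]
        refine hlim'.congr (fun x => ?_)
        simp [slope_def_field, hzero]
      exact this.differentiableAt
    · exact (hdiff a ha).differentiableAt (Ioi_mem_nhds ha)
  refine ⟨L + 1, l, ⟨hodd, ?_, ?_, hmono, fun a => (hd a).hasDerivAt, ?_, ?_, ?_, hzero, ?_, hl, hL.continuous⟩⟩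
  · intro a b
    have := hL.dist_le_mul a b
    rw [Real.dist_eq, Real.dist_eq] at this
    nlinarith [abs_nonneg (a - b)]
  · intro a
    rw [abs_le]
    have := hle (-a)
    rw [hodd] at this
    exact ⟨by linarith, hle a⟩
  · intro a; exact hmono.deriv_nonneg
  · intro a
    have := norm_deriv_le_of_lipschitz hL (x₀ := a)
    have := (le_abs_self _).trans this
    linarith
  · intro a ha
    have := hpos a ha.ne'
    exact pos_of_mul_pos_left this ha.le
  · positivity

/-- the unit circle vector -/
def Bc (s : ℝ) : E2 :=
  Real.sin (2 * π * s) • EuclideanSpace.single (0 : Fin 2) (1:ℝ) + Real.cos (2 * π * s) • EuclideanSpace.single (1 : Fin 2) (1:ℝ)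

def Bd (s : ℝ) : E2 :=
  (2 * π * Real.cos (2 * π * s)) • EuclideanSpace.single (0 : Fin 2) (1:ℝ) + (-(2 * π * Real.sin (2 * π * s))) • EuclideanSpace.single (1 : Fin 2) (1:ℝ)

lemma bvp_eq (ε t : ℝ) : bvp ε t = Bc (t / ε) := by
  ext i
  have : 2 * π * t / ε = 2 * π * (t / ε) := by ring
  fin_cases i <;> simp [bvp, Bc, this]

lemma inner_Bc (s : ℝ) (z : E2) : ⟪Bc s, z⟫ = Real.sin (2 * π * s) * z 0 + Real.cos (2 * π * s) * z 1 := by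
  simp [Bc, inner_add_left, inner_smul_left, EuclideanSpace.inner_single_left]

lemma Bc_add_one (s : ℝ) : Bc (s + 1) = Bc s := by
  have : 2 * π * (s + 1) = 2 * π * s + 2 * π := by ring
  simp [Bc, this]

lemma norm_Bc (s : ℝ) : ‖Bc s‖ = 1 := by
  rw [EuclideanSpace.norm_eq]
  simp [Bc]

lemma norm_Bd (s : ℝ) : ‖Bd s‖ ≤ 2 * π := by
  rw [EuclideanSpace.norm_eq]
  apply Real.sqrt_le_iff.2 ⟨by positivity, ?_⟩
  simp [Bd]
  nlinarith [Real.sin_sq_add_cos_sq (2 * π * s), sq_nonneg π]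

lemma hasDerivAt_Bc (s : ℝ) : HasDerivAt Bc (Bd s) s := by
  unfold Bc Bd
  have h0 : HasDerivAt (fun s : ℝ => 2 * π * s) (2 * π) s := by
    simpa using (hasDerivAt_id s).const_mul (2 * π)
  have h1 := (Real.hasDerivAt_sin (2 * π * s)).comp s h0
  have h2 := (Real.hasDerivAt_cos (2 * π * s)).comp s h0
  have := (h1.smul_const (EuclideanSpace.single (0 : Fin 2) (1:ℝ))).add
    (h2.smul_const (EuclideanSpace.single (1 : Fin 2) (1:ℝ)))
  refine this.congr_deriv ?_
  congr 2 <;> ring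

lemma continuous_Bc : Continuous Bc := by unfold Bc; fun_prop
lemma continuous_Bd : Continuous Bd := by unfold Bd; fun_prop

lemma abs_inner_Bc (s : ℝ) (z : E2) : |⟪Bc s, z⟫| ≤ ‖z‖ := by
  simpa [norm_Bc] using abs_real_inner_le_norm (Bc s) z

lemma integral_inner_sq (z : E2) : ∫ s in (0:ℝ)..1, ⟪Bc s, z⟫ ^ 2 = ‖z‖ ^ 2 / 2 := by
  have hd : ∀ s ∈ Set.uIcc (0:ℝ) 1, HasDerivAt (fun s => ‖z‖^2/2 * s + (z 1 ^ 2 - z 0 ^ 2) / (4 * π) * (Real.sin (2 * π * s) * Real.cos (2 * π * s)) + z 0 * z 1 / (2 * π) * Real.sin (2 * π * s) ^ 2) (⟪Bc s, z⟫ ^ 2) s := by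
    intro s _
    have h0 : HasDerivAt (fun s : ℝ => 2 * π * s) (2 * π) s := by
      simpa using (hasDerivAt_id s).const_mul (2 * π)
    have h1 := (Real.hasDerivAt_sin (2 * π * s)).comp s h0
    have h2 := (Real.hasDerivAt_cos (2 * π * s)).comp s h0
    have := ((((hasDerivAt_id s).const_mul (‖z‖^2/2)).add ((h1.mul h2).const_mul ((z 1 ^ 2 - z 0 ^ 2) / (4 * π)))).add ((h1.pow 2).const_mul (z 0 * z 1 / (2 * π))))
    refine this.congr_deriv ?_
    rw [inner_Bc, EuclideanSpace.norm_sq_eq]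
    simp only [Fin.sum_univ_two, Real.norm_eq_abs, sq_abs, Function.comp]
    have hp := Real.pi_pos.ne'
    field_simp
    have := Real.sin_sq_add_cos_sq (2 * π * s)
    have e : Real.cos (2 * π * s) ^ 2 = 1 - Real.sin (2 * π * s) ^ 2 := by linarith
    ring_nf
    ring_nf at e
    rw [e]
    ring
  rw [intervalIntegral.integral_eq_sub_of_hasDerivAt hd]
  · simp
  · apply Continuous.intervalIntegrable
    have := continuous_Bc
    fun_prop

def Gs (σ : ℝ → ℝ) (s : ℝ) (z : E2) : E2 := σ ⟪Bc s, z⟫ • Bc s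

def Fw (σ w : ℝ → ℝ) (τ : ℝ) (z : E2) : E2 := ∫ s in (0:ℝ)..1, w s • Gs σ (τ + s) z

def Ac (p : ℝ × E2) (s : ℝ) : ℝ × E2 →L[ℝ] ℝ :=
  (innerSL ℝ (Bc (p.1 + s))).comp (ContinuousLinearMap.snd ℝ ℝ E2)
    + ⟪Bd (p.1 + s), p.2⟫ • ContinuousLinearMap.fst ℝ ℝ E2

def Fd (σ w : ℝ → ℝ) (p : ℝ × E2) (s : ℝ) : ℝ × E2 →L[ℝ] E2 :=
  w s • (σ ⟪Bc (p.1 + s), p.2⟫ • (ContinuousLinearMap.fst ℝ ℝ E2).smulRight (Bd (p.1 + s))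
    + deriv σ ⟪Bc (p.1 + s), p.2⟫ • (Ac p s).smulRight (Bc (p.1 + s)))

lemma hasFDerivAt_Bshift (p : ℝ × E2) (s : ℝ) :
    HasFDerivAt (fun p : ℝ × E2 => Bc (p.1 + s))
      ((ContinuousLinearMap.fst ℝ ℝ E2).smulRight (Bd (p.1 + s))) p := by
  have h1 : HasFDerivAt (fun p : ℝ × E2 => p.1 + s) (ContinuousLinearMap.fst ℝ ℝ E2) p :=
    hasFDerivAt_fst.add_const s
  have := (hasDerivAt_Bc (p.1 + s)).hasFDerivAt.comp p h1
  refine this.congr_fderiv ?_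
  ext q <;> simp

lemma hasFDerivAt_Ac (p : ℝ × E2) (s : ℝ) :
    HasFDerivAt (fun p : ℝ × E2 => ⟪Bc (p.1 + s), p.2⟫) (Ac p s) p := by
  have := (hasFDerivAt_Bshift p s).inner ℝ (hasFDerivAt_snd (𝕜 := ℝ) (p := p))
  refine this.congr_fderiv ?_
  ext q <;> simp [Ac]

lemma hasFDerivAt_Fd {σ : ℝ → ℝ} {L M : ℝ} (h : SatF σ L M) (w : ℝ → ℝ) (p : ℝ × E2) (s : ℝ) :
    HasFDerivAt (fun p : ℝ × E2 => w s • Gs σ (p.1 + s) p.2) (Fd σ w p s) p := by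
  have h1 := (h.diff ⟪Bc (p.1 + s), p.2⟫).comp_hasFDerivAt p (hasFDerivAt_Ac p s)
  have h2 := (h1.smul (hasFDerivAt_Bshift p s)).const_smul (w s)
  refine h2.congr_fderiv ?_
  unfold Fd
  congr 2
  ext q <;> simp [mul_smul]

lemma norm_Ac (p : ℝ × E2) (s : ℝ) : ‖Ac p s‖ ≤ 1 + 2 * π * ‖p.2‖ := by
  unfold Ac
  refine (norm_add_le _ _).trans (add_le_add ?_ ?_)
  · refine (ContinuousLinearMap.opNorm_comp_le _ _).trans ?_
    rw [innerSL_apply_norm, norm_Bc, one_mul]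
    exact ContinuousLinearMap.norm_snd_le ℝ ℝ E2
  · rw [norm_smul]
    have h1 : ‖⟪Bd (p.1 + s), p.2⟫‖ ≤ 2 * π * ‖p.2‖ :=
      (norm_inner_le_norm _ _).trans (mul_le_mul_of_nonneg_right (norm_Bd _) (norm_nonneg _))
    have h2 := ContinuousLinearMap.norm_fst_le ℝ ℝ E2
    calc _ ≤ (2 * π * ‖p.2‖) * 1 := mul_le_mul h1 h2 (norm_nonneg _) (by positivity)
      _ = _ := mul_one _

lemma norm_Fd {σ : ℝ → ℝ} {L M : ℝ} (h : SatF σ L M) (w : ℝ → ℝ) (p : ℝ × E2) (s : ℝ) (hw : |w s| ≤ 1) :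
    ‖Fd σ w p s‖ ≤ M * (2 * π) + L * (1 + 2 * π * ‖p.2‖) := by
  have hM := h.Mpos
  have hL := h.Lpos
  unfold Fd
  rw [norm_smul]
  have h2 := ContinuousLinearMap.norm_fst_le ℝ ℝ E2
  have : ‖σ ⟪Bc (p.1 + s), p.2⟫ • (ContinuousLinearMap.fst ℝ ℝ E2).smulRight (Bd (p.1 + s))
    + deriv σ ⟪Bc (p.1 + s), p.2⟫ • (Ac p s).smulRight (Bc (p.1 + s))‖ ≤ M * (2 * π) + L * (1 + 2 * π * ‖p.2‖) := by
    refine (norm_add_le _ _).trans (add_le_add ?_ ?_)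
    · rw [norm_smul, ContinuousLinearMap.norm_smulRight_apply]
      refine mul_le_mul (h.bound _) ?_ (by positivity) hM.le
      calc _ ≤ 1 * (2 * π) := mul_le_mul h2 (norm_Bd _) (norm_nonneg _) (by positivity)
        _ = _ := one_mul _
    · rw [norm_smul, ContinuousLinearMap.norm_smulRight_apply, norm_Bc, mul_one]
      refine mul_le_mul ?_ (norm_Ac p s) (by positivity) hL.le
      rw [Real.norm_eq_abs, abs_of_nonneg (h.d0 _)]
      exact h.dL _
  calc _ ≤ 1 * _ := mul_le_mul hw this (norm_nonneg _) (by positivity)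
    _ = _ := one_mul _

lemma continuous_Gs {σ : ℝ → ℝ} {L M : ℝ} (h : SatF σ L M) (z : E2) : Continuous (fun s => Gs σ s z) := by
  have := h.cont
  have := continuous_Bc
  unfold Gs
  fun_prop

lemma continuous_Ac (p : ℝ × E2) : Continuous (Ac p) := by
  have := continuous_Bc
  have := continuous_Bd
  unfold Ac
  have h1 : Continuous fun s => innerSL ℝ (Bc (p.1 + s)) := by fun_prop
  have h2 : Continuous fun s => ⟪Bd (p.1 + s), p.2⟫ := by fun_prop
  exact (h1.clm_comp continuous_const).add (h2.smul continuous_const)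

lemma meas_Fd {σ : ℝ → ℝ} {L M : ℝ} (h : SatF σ L M) {w : ℝ → ℝ} (hw : Continuous w) (p : ℝ × E2)
    (μ : Measure ℝ) : AEStronglyMeasurable (Fd σ w p) μ := by
  have := continuous_Bc
  have := continuous_Bd
  have := continuous_Ac p
  have := h.cont
  unfold Fd
  have c1 : Continuous fun s => σ ⟪Bc (p.1 + s), p.2⟫ := by fun_prop
  have c2 : Continuous fun s => (ContinuousLinearMap.fst ℝ ℝ E2).smulRight (Bd (p.1 + s)) :=
    (ContinuousLinearMap.smulRightL ℝ (ℝ × E2) E2 (ContinuousLinearMap.fst ℝ ℝ E2)).continuous.comp (by fun_prop)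
  have c3 : Continuous fun s => (Ac p s).smulRight (Bc (p.1 + s)) := by
    have : Continuous fun s => ContinuousLinearMap.smulRightL ℝ (ℝ × E2) E2 (Ac p s) (Bc (p.1 + s)) := by
      fun_prop
    exact this
  have c4 : Continuous fun s => ⟪Bc (p.1 + s), p.2⟫ := by fun_prop
  have m4 : Measurable fun s => deriv σ ⟪Bc (p.1 + s), p.2⟫ := (measurable_deriv σ).comp c4.measurable
  exact hw.aestronglyMeasurable.smul
    ((c1.smul c2).aestronglyMeasurable.add (m4.aestronglyMeasurable.smul c3.aestronglyMeasurable))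

lemma intble_Fd {σ : ℝ → ℝ} {L M : ℝ} (h : SatF σ L M) {w : ℝ → ℝ} (hw : Continuous w)
    (hw1 : ∀ s ∈ Set.Icc (0:ℝ) 1, |w s| ≤ 1) (p : ℝ × E2) :
    IntervalIntegrable (Fd σ w p) volume 0 1 := by
  refine (intervalIntegrable_const (c := M * (2 * π) + L * (1 + 2 * π * ‖p.2‖))).mono_fun' (meas_Fd h hw p _) ?_
  refine (ae_restrict_iff' measurableSet_uIoc).2 (Eventually.of_forall fun s hs => ?_)
  rw [Set.uIoc_of_le zero_le_one] at hs
  exact norm_Fd h w p s (hw1 s ⟨hs.1.le, hs.2⟩)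

lemma hasFDerivAt_Fw {σ : ℝ → ℝ} {L M : ℝ} (h : SatF σ L M) {w : ℝ → ℝ} (hw : Continuous w)
    (hw1 : ∀ s ∈ Set.Icc (0:ℝ) 1, |w s| ≤ 1) (p : ℝ × E2) :
    HasFDerivAt (fun p : ℝ × E2 => Fw σ w p.1 p.2) (∫ s in (0:ℝ)..1, Fd σ w p s) p := by
  have hc : ∀ p : ℝ × E2, Continuous fun s => w s • Gs σ (p.1 + s) p.2 := fun p =>
    hw.smul ((continuous_Gs h p.2).comp (by fun_prop))
  refine intervalIntegral.hasFDerivAt_integral_of_dominated_of_fderiv_le (s := Metric.ball p 1)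
    (F := fun (p : ℝ × E2) s => w s • Gs σ (p.1 + s) p.2)
    (bound := fun _ => M * (2 * π) + L * (1 + 2 * π * (‖p‖ + 1))) (Metric.ball_mem_nhds p one_pos) ?_ ?_ ?_ ?_ ?_ ?_
  · exact Eventually.of_forall fun q => (hc q).aestronglyMeasurable
  · exact (hc p).intervalIntegrable _ _
  · exact meas_Fd h hw p _
  · refine Eventually.of_forall fun s hs q hq => ?_
    rw [Set.uIoc_of_le zero_le_one] at hs
    refine (norm_Fd h w q s (hw1 s ⟨hs.1.le, hs.2⟩)).trans ?_
    have h1 : ‖q‖ ≤ ‖p‖ + 1 := by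
      have := norm_sub_norm_le q p
      rw [Metric.mem_ball, dist_eq_norm] at hq
      linarith
    have h2 : ‖q.2‖ ≤ ‖p‖ + 1 := (norm_snd_le q).trans h1
    have := h.Lpos
    gcongr
  · exact intervalIntegrable_const
  · exact Eventually.of_forall fun s _ q _ => hasFDerivAt_Fd h w q s

/-- derivative in `s` of `Gs` -/
def Gd (σ : ℝ → ℝ) (s : ℝ) (z : E2) : E2 :=
  σ ⟪Bc s, z⟫ • Bd s + (deriv σ ⟪Bc s, z⟫ * ⟪Bd s, z⟫) • Bc s

lemma Fd_apply (σ w : ℝ → ℝ) (p : ℝ × E2) (s : ℝ) (q : ℝ × E2) :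
    Fd σ w p s q = (w s * (deriv σ ⟪Bc (p.1 + s), p.2⟫ * ⟪Bc (p.1 + s), q.2⟫)) • Bc (p.1 + s)
      + (w s * q.1) • Gd σ (p.1 + s) p.2 := by
  simp only [Fd, Ac, Gd, _root_.smul_apply, _root_.add_apply,
    ContinuousLinearMap.smulRight_apply, ContinuousLinearMap.coe_fst', ContinuousLinearMap.coe_snd',
    ContinuousLinearMap.comp_apply, innerSL_apply_apply, smul_eq_mul, smul_add, smul_smul]
  module

lemma hasDerivAt_Gs {σ : ℝ → ℝ} {L M : ℝ} (h : SatF σ L M) (s : ℝ) (z : E2) :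
    HasDerivAt (fun s => Gs σ s z) (Gd σ s z) s := by
  have h1 := ((hasDerivAt_Bc s).inner ℝ (hasDerivAt_const s z))
  have h2 := ((h.diff ⟪Bc s, z⟫).comp s h1).smul (hasDerivAt_Bc s)
  refine h2.congr_deriv ?_
  simp [Gd]

def Adw (σ w : ℝ → ℝ) (τ : ℝ) (z v : E2) : E2 :=
  ∫ s in (0:ℝ)..1, (w s * (deriv σ ⟪Bc (τ + s), z⟫ * ⟪Bc (τ + s), v⟫)) • Bc (τ + s)

section
variable {σ : ℝ → ℝ} {L M : ℝ}

lemma intble_Fd_apply (h : SatF σ L M) {w : ℝ → ℝ} (hw : Continuous w)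
    (hw1 : ∀ s ∈ Set.Icc (0:ℝ) 1, |w s| ≤ 1) (p q : ℝ × E2) :
    IntervalIntegrable (fun s => Fd σ w p s q) volume 0 1 := by
  have := intble_Fd h hw hw1 p
  rw [intervalIntegrable_iff] at this ⊢
  exact this.apply_continuousLinearMap q

lemma intble_Adw (h : SatF σ L M) {w : ℝ → ℝ} (hw : Continuous w)
    (hw1 : ∀ s ∈ Set.Icc (0:ℝ) 1, |w s| ≤ 1) (τ : ℝ) (z v : E2) :
    IntervalIntegrable (fun s => (w s * (deriv σ ⟪Bc (τ + s), z⟫ * ⟪Bc (τ + s), v⟫)) • Bc (τ + s)) volume 0 1 := by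
  have := intble_Fd_apply h hw hw1 (τ, z) (0, v)
  simpa [Fd_apply] using this

lemma intble_Gd (h : SatF σ L M) {w : ℝ → ℝ} (hw : Continuous w)
    (hw1 : ∀ s ∈ Set.Icc (0:ℝ) 1, |w s| ≤ 1) (τ : ℝ) (z : E2) :
    IntervalIntegrable (fun s => w s • Gd σ (τ + s) z) volume 0 1 := by
  have := intble_Fd_apply h hw hw1 (τ, z) (1, 0)
  simpa [Fd_apply] using this

lemma hasDerivAt_Fw_curve (h : SatF σ L M) {w : ℝ → ℝ} (hw : Continuous w)
    (hw1 : ∀ s ∈ Set.Icc (0:ℝ) 1, |w s| ≤ 1) {z : ℝ → E2} {z' : E2} {t ε : ℝ}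
    (hz : HasDerivAt z z' t) :
    HasDerivAt (fun t => Fw σ w (t / ε) (z t))
      (Adw σ w (t / ε) (z t) z' + (1 / ε) • ∫ s in (0:ℝ)..1, w s • Gd σ (t / ε + s) (z t)) t := by
  have h1 : HasDerivAt (fun t => (t / ε, z t)) (1 / ε, z') t :=
    ((hasDerivAt_id t).div_const ε).prodMk hz
  have h2 := (hasFDerivAt_Fw h hw hw1 (t / ε, z t)).comp_hasDerivAt t h1
  refine h2.congr_deriv ?_
  have e : ((1 / ε, z') : ℝ × E2) = (0, z') + (1 / ε) • ((1, 0) : ℝ × E2) := by simp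
  rw [e, map_add, map_smul, ContinuousLinearMap.intervalIntegral_apply (intble_Fd h hw hw1 _),
    ContinuousLinearMap.intervalIntegral_apply (intble_Fd h hw hw1 _)]
  simp [Fd_apply, Adw]

lemma Gs_add_one (s : ℝ) (z : E2) : Gs σ (s + 1) z = Gs σ s z := by
  simp [Gs, Bc_add_one]

/-- the averaged field -/
def fv (σ : ℝ → ℝ) (z : E2) : E2 := ∫ s in (0:ℝ)..1, Gs σ s z

lemma Fw_one (τ : ℝ) (z : E2) : Fw σ (fun _ => 1) τ z = fv σ z := by
  have hp : Function.Periodic (fun s => Gs σ s z) 1 := fun s => Gs_add_one s z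
  have := hp.intervalIntegral_add_eq τ 0
  simp only [Fw, one_smul, fv]
  rw [intervalIntegral.integral_comp_add_left (fun s => Gs σ s z) τ]
  simpa using this

lemma integral_Gd_one (h : SatF σ L M) (τ : ℝ) (z : E2) :
    ∫ s in (0:ℝ)..1, (1:ℝ) • Gd σ (τ + s) z = 0 := by
  have hi := intble_Gd h (w := fun _ => 1) continuous_const (by simp) τ z
  rw [intervalIntegral.integral_eq_sub_of_hasDerivAt (f := fun s => Gs σ (τ + s) z) _ hi]
  · simp [Gs_add_one]
  · intro s _
    exact ((hasDerivAt_Gs h (τ + s) z).scomp s ((hasDerivAt_id s).const_add τ))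

lemma integral_Gd_id (h : SatF σ L M) (τ : ℝ) (z : E2) :
    ∫ s in (0:ℝ)..1, s • Gd σ (τ + s) z = Gs σ τ z - fv σ z := by
  have hi := intble_Gd h (w := fun s => s) continuous_id (fun s hs => abs_le.2 ⟨by linarith [hs.1], hs.2⟩) τ z
  have hc : Continuous fun s => Gs σ (τ + s) z := (continuous_Gs h z).comp (by fun_prop)
  have key : ∫ s in (0:ℝ)..1, (s • Gd σ (τ + s) z + Gs σ (τ + s) z) = Gs σ τ z := by
    rw [intervalIntegral.integral_eq_sub_of_hasDerivAt (f := fun s => s • Gs σ (τ + s) z) _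
      (hi.add (hc.intervalIntegrable _ _))]
    · simp [Gs_add_one]
    · intro s _
      have h1 : HasDerivAt (fun s => Gs σ (τ + s) z) ((1:ℝ) • Gd σ (τ + s) z) s :=
        (hasDerivAt_Gs h (τ + s) z).scomp s ((hasDerivAt_id s).const_add τ)
      exact ((hasDerivAt_id s).smul h1).congr_deriv (by simp)
  rw [intervalIntegral.integral_add hi (hc.intervalIntegrable _ _)] at key
  have := Fw_one (σ := σ) τ z
  simp only [Fw, one_smul] at this
  rw [this] at key
  rw [← key]; simp

def Hc (σ : ℝ → ℝ) (τ : ℝ) (z : E2) : E2 := Fw σ (fun s => s) τ z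

lemma hasDerivAt_fv (h : SatF σ L M) {z : ℝ → E2} {z' : E2} {t ε : ℝ}
    (hz : HasDerivAt z z' t) :
    HasDerivAt (fun t => fv σ (z t)) (Adw σ (fun _ => 1) (t / ε) (z t) z') t := by
  have := hasDerivAt_Fw_curve h (w := fun _ => 1) (ε := ε) continuous_const (by simp) hz
  rw [integral_Gd_one h] at this
  simpa [Fw_one] using this

lemma hasDerivAt_Hc (h : SatF σ L M) {z : ℝ → E2} {z' : E2} {t ε : ℝ}
    (hz : HasDerivAt z z' t) :
    HasDerivAt (fun t => Hc σ (t / ε) (z t))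
      (Adw σ (fun s => s) (t / ε) (z t) z' + (1 / ε) • (Gs σ (t / ε) (z t) - fv σ (z t))) t := by
  have := hasDerivAt_Fw_curve h (w := fun s => s) (ε := ε) continuous_id
    (fun s hs => abs_le.2 ⟨by linarith [hs.1], hs.2⟩) hz
  rwa [integral_Gd_id h] at this

lemma norm_Gs (h : SatF σ L M) (s : ℝ) (z : E2) : ‖Gs σ s z‖ ≤ M := by
  rw [Gs, norm_smul, norm_Bc, mul_one]; exact h.bound _

lemma norm_Fw (h : SatF σ L M) {w : ℝ → ℝ} (hw1 : ∀ s ∈ Set.Icc (0:ℝ) 1, |w s| ≤ 1) (τ : ℝ) (z : E2) :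
    ‖Fw σ w τ z‖ ≤ M := by
  have := intervalIntegral.norm_integral_le_of_norm_le_const (a := 0) (b := 1) (C := M)
    (f := fun s => w s • Gs σ (τ + s) z) ?_
  · simpa [Fw] using this
  · intro s hs
    rw [Set.uIoc_of_le zero_le_one] at hs
    rw [norm_smul]
    have h1 := hw1 s ⟨hs.1.le, hs.2⟩
    calc _ ≤ 1 * M := mul_le_mul h1 (norm_Gs h _ _) (norm_nonneg _) (by positivity)
      _ = M := one_mul _

lemma norm_Hc (h : SatF σ L M) (τ : ℝ) (z : E2) : ‖Hc σ τ z‖ ≤ M :=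
  norm_Fw h (fun s hs => abs_le.2 ⟨by linarith [hs.1], hs.2⟩) τ z

lemma norm_fv (h : SatF σ L M) (z : E2) : ‖fv σ z‖ ≤ M := by
  rw [← Fw_one 0 z]
  exact norm_Fw h (by simp) 0 z

lemma inner_fv (h : SatF σ L M) (v z : E2) :
    ⟪v, fv σ z⟫ = ∫ s in (0:ℝ)..1, σ ⟪Bc s, z⟫ * ⟪Bc s, v⟫ := by
  have := (innerSL ℝ v).intervalIntegral_comp_comm ((continuous_Gs h z).intervalIntegrable (μ := volume) 0 1)
  simp only [innerSL_apply_apply] at this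
  rw [fv, ← this]
  simp [Gs, inner_smul_right, real_inner_comm]

lemma inner_Adw (h : SatF σ L M) {w : ℝ → ℝ} (hw : Continuous w)
    (hw1 : ∀ s ∈ Set.Icc (0:ℝ) 1, |w s| ≤ 1) (τ : ℝ) (u z v : E2) :
    IntervalIntegrable (fun s => (w s * (deriv σ ⟪Bc (τ + s), z⟫ * ⟪Bc (τ + s), v⟫)) * ⟪Bc (τ + s), u⟫) volume 0 1 ∧
    ⟪u, Adw σ w τ z v⟫ = ∫ s in (0:ℝ)..1, (w s * (deriv σ ⟪Bc (τ + s), z⟫ * ⟪Bc (τ + s), v⟫)) * ⟪Bc (τ + s), u⟫ := by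
  have hi := intble_Adw h hw hw1 τ z v
  have := (innerSL ℝ u).intervalIntegral_comp_comm hi
  constructor
  · rw [intervalIntegrable_iff] at hi ⊢
    have := (innerSL ℝ u).integrable_comp hi
    refine this.congr (Eventually.of_forall fun s => ?_)
    simp [real_inner_comm]
  · simp only [innerSL_apply_apply] at this
    rw [Adw, ← this]
    simp [inner_smul_right, real_inner_comm]

lemma scalar_bound {s p u c hh M : ℝ} (hs0 : 0 ≤ s) (hs1 : s ≤ 1) (hp : |p| ≤ M) (hc : |c| ≤ M)
    (hh' : |hh| ≤ M) : s * (u - c) * (p + 2 * u) + (u - c) * (hh - 8 * u) ≤ 8 * M ^ 2 := by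
  have hM : 0 ≤ M := (abs_nonneg _).trans hp
  have e : s * (u - c) * (p + 2 * u) + (u - c) * (hh - 8 * u)
    = (2 * s - 8) * u ^ 2 + u * (s * (p - 2 * c)) + u * (hh + 8 * c) - s * (p * c) - hh * c := by ring
  have b1 : u * (s * (p - 2 * c)) ≤ |u| * (3 * M) := by
    refine (le_abs_self _).trans ?_
    rw [abs_mul, abs_mul, abs_of_nonneg hs0]
    have : |p - 2 * c| ≤ 3 * M := by rw [abs_le] at *; constructor <;> linarith
    refine mul_le_mul_of_nonneg_left ?_ (abs_nonneg u)
    nlinarith [abs_nonneg (p - 2 * c)]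
  have b2 : u * (hh + 8 * c) ≤ |u| * (9 * M) := by
    refine (le_abs_self _).trans ?_
    rw [abs_mul]
    have : |hh + 8 * c| ≤ 9 * M := by rw [abs_le] at *; constructor <;> linarith
    gcongr
  have b3 : |p * c| ≤ M * M := by rw [abs_mul]; gcongr
  have b4 : |hh * c| ≤ M * M := by rw [abs_mul]; gcongr
  have b5 : - (s * (p * c)) ≤ M * M := by
    have := neg_abs_le (p * c)
    nlinarith [abs_nonneg (p * c)]
  have b6 := neg_abs_le (hh * c)
  have b7 : (2 * s - 8) * u ^ 2 ≤ -6 * |u| ^ 2 := by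
    rw [sq_abs]; nlinarith [sq_nonneg u]
  rw [e]
  nlinarith [sq_nonneg (|u| - M)]

lemma corr_bound (h : SatF σ L M) (τ : ℝ) (z y f g H : E2) (hf : ‖f‖ ≤ M) (hg : ‖g‖ ≤ M) (hH : ‖H‖ ≤ M) :
    ⟪f + (2:ℝ) • y, Adw σ (fun s => s) τ z (y - g)⟫ + ⟪H - (8:ℝ) • y, Adw σ (fun _ => 1) τ z (y - g)⟫
      ≤ 8 * L * M ^ 2 := by
  obtain ⟨i1, e1⟩ := inner_Adw h (w := fun s => s) continuous_id
    (fun s hs => abs_le.2 ⟨by linarith [hs.1], hs.2⟩) τ (f + (2:ℝ) • y) z (y - g)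
  obtain ⟨i2, e2⟩ := inner_Adw h (w := fun _ => 1) continuous_const
    (by simp) τ (H - (8:ℝ) • y) z (y - g)
  rw [e1, e2, ← intervalIntegral.integral_add i1 i2]
  have : ∫ s in (0:ℝ)..1, (8 * L * M ^ 2) = 8 * L * M ^ 2 := by simp
  rw [← this]
  refine intervalIntegral.integral_mono_on zero_le_one (i1.add i2) intervalIntegrable_const ?_
  intro s hs
  have hb := scalar_bound (s := s) (u := ⟪Bc (τ + s), y⟫) hs.1 hs.2 ((abs_inner_Bc (τ + s) f).trans hf) ((abs_inner_Bc (τ + s) g).trans hg)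
    ((abs_inner_Bc (τ + s) H).trans hH)
  simp only [inner_add_right, inner_sub_right, inner_smul_right]
  have d0 := h.d0 ⟪Bc (τ + s), z⟫
  have dL := h.dL ⟪Bc (τ + s), z⟫
  have hb2 := mul_le_mul_of_nonneg_left hb d0
  have : deriv σ ⟪Bc (τ + s), z⟫ * (8 * M ^ 2) ≤ L * (8 * M ^ 2) := by gcongr
  calc _ = deriv σ ⟪Bc (τ + s), z⟫ * (s * (⟪Bc (τ + s), y⟫ - ⟪Bc (τ + s), g⟫) * (⟪Bc (τ + s), f⟫ + 2 * ⟪Bc (τ + s), y⟫) +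
      (⟪Bc (τ + s), y⟫ - ⟪Bc (τ + s), g⟫) * (⟪Bc (τ + s), H⟫ - 8 * ⟪Bc (τ + s), y⟫)) := by ring
    _ ≤ _ := by linarith

end

def ph (σ : ℝ → ℝ) (a : ℝ) : ℝ := ∫ x in (0:ℝ)..a, σ x
def Phi (σ : ℝ → ℝ) (z : E2) : ℝ := ∫ s in (0:ℝ)..1, ph σ ⟪Bc s, z⟫

section
variable {σ : ℝ → ℝ} {L M : ℝ}

lemma hasDerivAt_ph (h : SatF σ L M) (a : ℝ) : HasDerivAt (ph σ) (σ a) a :=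
  intervalIntegral.integral_hasDerivAt_right (h.cont.intervalIntegrable _ _)
    (h.cont.stronglyMeasurableAtFilter _ _) h.cont.continuousAt

lemma continuous_ph (h : SatF σ L M) : Continuous (ph σ) :=
  continuous_iff_continuousAt.2 fun a => (hasDerivAt_ph h a).continuousAt

lemma continuous_phB (h : SatF σ L M) (z : E2) : Continuous fun s => ph σ ⟪Bc s, z⟫ := by
  have := continuous_ph h
  have := continuous_Bc
  fun_prop

lemma hasFDerivAt_Phi (h : SatF σ L M) (z : E2) :
    HasFDerivAt (Phi σ) (∫ s in (0:ℝ)..1, (σ ⟪Bc s, z⟫) • innerSL ℝ (Bc s)) z := by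
  have := h.cont
  have := continuous_Bc
  have hc : Continuous fun s => (σ ⟪Bc s, z⟫) • innerSL ℝ (Bc s) := by fun_prop
  refine intervalIntegral.hasFDerivAt_integral_of_dominated_of_fderiv_le (s := Metric.ball z 1)
    (F := fun (z : E2) s => ph σ ⟪Bc s, z⟫) (F' := fun (z : E2) s => (σ ⟪Bc s, z⟫) • innerSL ℝ (Bc s))
    (bound := fun _ => M) (Metric.ball_mem_nhds z one_pos) ?_ ?_ ?_ ?_ ?_ ?_
  · exact Eventually.of_forall fun q => (continuous_phB h q).aestronglyMeasurable
  · exact (continuous_phB h z).intervalIntegrable _ _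
  · exact hc.aestronglyMeasurable
  · refine Eventually.of_forall fun s hs q hq => ?_
    rw [norm_smul, innerSL_apply_norm, norm_Bc, mul_one]
    exact h.bound _
  · exact intervalIntegrable_const
  · refine Eventually.of_forall fun s _ q _ => ?_
    exact (hasDerivAt_ph h ⟪Bc s, q⟫).comp_hasFDerivAt q (innerSL ℝ (Bc s)).hasFDerivAt

lemma hasDerivAt_Phi (h : SatF σ L M) {z : ℝ → E2} {z' : E2} {t : ℝ} (hz : HasDerivAt z z' t) :
    HasDerivAt (fun t => Phi σ (z t)) ⟪z', fv σ (z t)⟫ t := by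
  have := h.cont
  have := continuous_Bc
  have hc : Continuous fun s => (σ ⟪Bc s, z t⟫) • innerSL ℝ (Bc s) := by fun_prop
  refine ((hasFDerivAt_Phi h (z t)).comp_hasDerivAt t hz).congr_deriv ?_
  rw [ContinuousLinearMap.intervalIntegral_apply (hc.intervalIntegrable _ _), inner_fv h]
  simp

def Wl (σ : ℝ → ℝ) (ε t : ℝ) (z y : E2) : ℝ :=
  ⟪y, y⟫ + Phi σ z + Phi σ (z - y) + ε * ⟪fv σ z + (2:ℝ) • y, Hc σ (t / ε) z⟫ - 8 * ε * ⟪y, fv σ z⟫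

lemma abs_inner_le {u v : E2} {a b : ℝ} (hu : ‖u‖ ≤ a) (hv : ‖v‖ ≤ b) : |⟪u, v⟫| ≤ a * b :=
  (abs_real_inner_le_norm u v).trans
    (mul_le_mul hu hv (norm_nonneg _) ((norm_nonneg _).trans hu))

lemma Wl_deriv (h : SatF σ L M) {ε : ℝ} (hε : 0 < ε) {z y : ℝ → E2} (hs : IsSolTeps σ ε z y)
    {t : ℝ} (ht : 0 ≤ t) :
    ∃ d, HasDerivAt (fun t => Wl σ ε t (z t) (y t)) d t ∧
      d ≤ -⟪fv σ (z t), fv σ (z t)⟫ - ⟪y t, fv σ (z t) - fv σ (z t - y t)⟫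
        + ε * (8 * L * M ^ 2 + 10 * M ^ 2) := by
  obtain ⟨hz, hy⟩ := hs t ht
  rw [bvp_eq] at hz hy
  have hz : HasDerivAt z (y t - Gs σ (t / ε) (z t)) t := hz
  have hy : HasDerivAt y (-(Gs σ (t / ε) (z t))) t := by
    refine hy.congr_deriv ?_
    simp [Gs]
  set g := Gs σ (t / ε) (z t) with hg
  have hw : HasDerivAt (fun t => z t - y t) (y t) t := (hz.sub hy).congr_deriv (by simp)
  have hf := hasDerivAt_fv h (ε := ε) hz
  have hH := hasDerivAt_Hc h (ε := ε) hz
  have hd := ((((hy.inner ℝ hy).add (hasDerivAt_Phi h hz)).add (hasDerivAt_Phi h hw)).add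
    (((hf.add (hy.const_smul (2:ℝ))).inner ℝ hH).const_mul ε)).sub ((hy.inner ℝ hf).const_mul (8 * ε))
  refine ⟨_, hd, ?_⟩
  have nf := norm_fv h (z t)
  have ng := norm_Gs h (t / ε) (z t)
  have nH := norm_Hc h (t / ε) (z t)
  have key := corr_bound h (t / ε) (z t) (y t) _ g _ nf ng nH
  have b1 := (abs_le.1 (abs_inner_le nH ng)).1
  have b2 := (abs_le.1 (abs_inner_le ng nf)).2
  rw [← hg] at b1 b2
  rw [← hg]
  set f := fv σ (z t)
  set fw := fv σ (z t - y t)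
  set H := Hc σ (t / ε) (z t)
  set A1 := Adw σ (fun s => s) (t / ε) (z t) (y t - g)
  set A0 := Adw σ (fun _ => 1) (t / ε) (z t) (y t - g)
  set Y := y t
  have e : ⟪f + (2:ℝ) • Y, A1 + (1 / ε) • (g - f)⟫ = ⟪f + (2:ℝ) • Y, A1⟫ + (1 / ε) * ⟪f + (2:ℝ) • Y, g - f⟫ := by
    rw [inner_add_right, inner_smul_right]
  have e2 : ε * ⟪f + (2:ℝ) • Y, A1 + (1 / ε) • (g - f)⟫ = ε * ⟪f + (2:ℝ) • Y, A1⟫ + ⟪f + (2:ℝ) • Y, g - f⟫ := by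
    rw [e]; field_simp
  have key2 := mul_le_mul_of_nonneg_left key hε.le
  have b1' := mul_le_mul_of_nonneg_left b1 hε.le
  have b2' := mul_le_mul_of_nonneg_left b2 hε.le
  simp only [Pi.add_apply, Pi.smul_apply]
  change ⟪Y, -g⟫ + ⟪-g, Y⟫ + ⟪Y - g, f⟫ + ⟪Y, fw⟫ + ε * (⟪f + (2:ℝ) • Y, A1 + (1 / ε) • (g - f)⟫ + ⟪A0 + (2:ℝ) • -g, H⟫) - 8 * ε * (⟪Y, A0⟫ + ⟪-g, f⟫) ≤ _
  rw [mul_add ε, e2]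
  simp only [inner_add_left, inner_add_right, inner_sub_left, inner_sub_right, real_inner_smul_left,
    real_inner_smul_right, inner_neg_left, inner_neg_right] at *
  rw [real_inner_comm Y g, real_inner_comm f g, real_inner_comm H A0, real_inner_comm H g, real_inner_comm f Y] at *
  nlinarith

end

section
variable {σ : ℝ → ℝ} {L M : ℝ}

lemma sq_div_le (s : ℝ) (z : E2) : ⟪Bc s, z⟫ ^ 2 / ‖z‖ ≤ |⟪Bc s, z⟫| := by
  have h1 := abs_inner_Bc s z
  rcases (norm_nonneg z).eq_or_lt with h0 | h0
  · rw [← h0]; simp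
  · rw [div_le_iff₀ h0, ← sq_abs]
    nlinarith [abs_nonneg ⟪Bc s, z⟫]

lemma integral_lower (z : E2) (k ρ : ℝ) :
    IntervalIntegrable (fun s => k * (⟪Bc s, z⟫ ^ 2 / ‖z‖ - ρ)) volume 0 1 ∧
    ∫ s in (0:ℝ)..1, k * (⟪Bc s, z⟫ ^ 2 / ‖z‖ - ρ) = k * (‖z‖ / 2 - ρ) := by
  have hc := continuous_Bc
  have c1 : Continuous fun s => ⟪Bc s, z⟫ ^ 2 / ‖z‖ := by fun_prop
  refine ⟨Continuous.intervalIntegrable (by fun_prop) _ _, ?_⟩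
  rw [intervalIntegral.integral_const_mul, intervalIntegral.integral_sub (c1.intervalIntegrable _ _)
    intervalIntegrable_const, intervalIntegral.integral_div, integral_inner_sq]
  congr 1
  simp
  rcases eq_or_ne ‖z‖ 0 with h0 | h0
  · rw [h0]; simp
  · field_simp

lemma abs_arg (h : SatF σ L M) (a : ℝ) : σ a * a = σ |a| * |a| := by
  rcases abs_cases a with ⟨e, _⟩ | ⟨e, _⟩ <;> rw [e]
  rw [h.odd]; ring

lemma sig_lower (h : SatF σ L M) {ρ : ℝ} (hρ : 0 < ρ) (a : ℝ) : σ ρ * (|a| - ρ) ≤ σ a * a := by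
  rw [abs_arg h]
  have h1 := h.pos ρ hρ
  rcases le_total ρ |a| with h2 | h2
  · have := h.mono h2
    nlinarith
  · have h3 : 0 ≤ σ |a| := by rw [← h.zero]; exact h.mono (abs_nonneg a)
    nlinarith [mul_nonneg h3 (abs_nonneg a)]

lemma continuous_sb (h : SatF σ L M) (z v : E2) : Continuous fun s => σ ⟪Bc s, z⟫ * ⟪Bc s, v⟫ := by
  have := h.cont
  have := continuous_Bc
  fun_prop

lemma fv_lower (h : SatF σ L M) {ρ : ℝ} (hρ : 0 < ρ) (z : E2) :
    σ ρ * (‖z‖ / 2 - ρ) ≤ ⟪z, fv σ z⟫ := by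
  obtain ⟨i, e⟩ := integral_lower z (σ ρ) ρ
  rw [← e, inner_fv h]
  refine intervalIntegral.integral_mono_on zero_le_one i ((continuous_sb h z z).intervalIntegrable _ _) ?_
  intro s _
  have h1 := sq_div_le s z
  have h2 := sig_lower h hρ ⟪Bc s, z⟫
  have h3 := h.pos ρ hρ
  nlinarith

lemma fv_small (h : SatF σ L M) (z : E2) : ‖fv σ z‖ ≤ L * ‖z‖ := by
  have := intervalIntegral.norm_integral_le_of_norm_le_const (a := 0) (b := 1) (C := L * ‖z‖)
    (f := fun s => Gs σ s z) ?_
  · simpa [fv] using this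
  · intro s hs
    rw [Gs, norm_smul, norm_Bc, mul_one]
    have h1 := h.lip ⟪Bc s, z⟫ 0
    rw [h.zero, sub_zero, sub_zero] at h1
    exact h1.trans (mul_le_mul_of_nonneg_left (abs_inner_Bc s z) h.Lpos.le)

lemma D_nonneg (h : SatF σ L M) (z y : E2) : 0 ≤ ⟪y, fv σ z - fv σ (z - y)⟫ := by
  rw [inner_sub_right, inner_fv h, inner_fv h, ← intervalIntegral.integral_sub
    ((continuous_sb h z y).intervalIntegrable _ _) ((continuous_sb h (z - y) y).intervalIntegrable _ _)]
  refine intervalIntegral.integral_nonneg zero_le_one fun s _ => ?_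
  rw [inner_sub_right]
  rcases le_total 0 ⟪Bc s, y⟫ with h0 | h0
  · have := h.mono (show ⟪Bc s, z⟫ - ⟪Bc s, y⟫ ≤ ⟪Bc s, z⟫ by linarith)
    nlinarith
  · have := h.mono (show ⟪Bc s, z⟫ ≤ ⟪Bc s, z⟫ - ⟪Bc s, y⟫ by linarith)
    nlinarith

lemma dissip (h : SatF σ L M) : ∃ c > 0, ∃ r > 0, ∃ Y > 0, ∀ z y : E2, (r ≤ ‖z‖ ∨ Y ≤ ‖y‖) →
    c ≤ ⟪fv σ z, fv σ z⟫ + ⟪y, fv σ z - fv σ (z - y)⟫ := by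
  have s1 := h.pos 1 one_pos
  have hL := h.Lpos
  have hM := h.Mpos
  set r := min 1 (σ 1 / (8 * L)) with hr
  have rpos : 0 < r := lt_min one_pos (by positivity)
  have r1 : r ≤ 1 := min_le_left _ _
  have r2 : L * r ≤ σ 1 / 8 := by
    have : r ≤ σ 1 / (8 * L) := min_le_right _ _
    rw [le_div_iff₀ (by positivity)] at this
    linarith
  have sr := h.pos (r / 4) (by positivity)
  refine ⟨min ((σ (r / 4) / 4) ^ 2) 1, lt_min (by positivity) one_pos, r, rpos,
    (1 + M + 2 * σ 1) / (σ 1 / 4), by positivity, ?_⟩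
  intro z y hzy
  have hD := D_nonneg h z y
  have hF : 0 ≤ ⟪fv σ z, fv σ z⟫ := real_inner_self_nonneg
  rcases le_or_gt r ‖z‖ with hz | hz
  · refine (min_le_left _ _).trans ?_
    have h1 := fv_lower h (ρ := r / 4) (by positivity) z
    have h2 := real_inner_le_norm z (fv σ z)
    have h3 : σ (r / 4) / 4 ≤ ‖fv σ z‖ := by
      have : σ (r / 4) * (‖z‖ / 4) ≤ ‖z‖ * ‖fv σ z‖ := by
        refine le_trans ?_ (h1.trans h2)
        gcongr
        linarith
      have hzp : 0 < ‖z‖ := rpos.trans_le hz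
      nlinarith
    have : (σ (r / 4) / 4) ^ 2 ≤ ‖fv σ z‖ ^ 2 := by gcongr
    rw [real_inner_self_eq_norm_sq]
    linarith
  · refine (min_le_right _ _).trans ?_
    have hy : (1 + M + 2 * σ 1) / (σ 1 / 4) ≤ ‖y‖ := hzy.resolve_left (not_le.2 hz)
    rw [div_le_iff₀ (by positivity)] at hy
    set w := z - y with hw
    have e : ⟪y, fv σ z - fv σ w⟫ = ⟪y, fv σ z⟫ + ⟪w, fv σ w⟫ - ⟪z, fv σ w⟫ := by
      rw [hw, inner_sub_right, inner_sub_left]; ring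
    have h1 := fv_lower h one_pos w
    have h2 : |⟪y, fv σ z⟫| ≤ ‖y‖ * (σ 1 / 8) := abs_inner_le le_rfl
      ((fv_small h z).trans ((mul_le_mul_of_nonneg_left hz.le hL.le).trans r2))
    have h3 : |⟪z, fv σ w⟫| ≤ 1 * M := abs_inner_le (hz.le.trans r1) (norm_fv h w)
    have h4 : ‖y‖ - 1 ≤ ‖w‖ := by
      have := norm_sub_norm_le y z
      rw [norm_sub_rev] at this
      linarith
    have h5 := (abs_le.1 h2).1
    have h6 := (abs_le.1 h3).2
    have h7 : σ 1 * ((‖y‖ - 1) / 2 - 1) ≤ σ 1 * (‖w‖ / 2 - 1) := by gcongr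
    nlinarith [norm_nonneg y]

lemma ph_even (h : SatF σ L M) (a : ℝ) : ph σ |a| = ph σ a := by
  rcases abs_cases a with ⟨e, _⟩ | ⟨e, _⟩ <;> rw [e]
  unfold ph
  have := intervalIntegral.integral_comp_neg (a := 0) (b := a) σ
  simp only [h.odd, neg_zero, intervalIntegral.integral_neg] at this
  rw [intervalIntegral.integral_symm, ← this, neg_neg]

lemma ph_nonneg (h : SatF σ L M) (a : ℝ) : 0 ≤ ph σ a := by
  rw [← ph_even h]
  refine intervalIntegral.integral_nonneg (abs_nonneg a) fun x hx => ?_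
  rw [← h.zero]; exact h.mono hx.1

lemma ph_le (h : SatF σ L M) (a : ℝ) : ph σ a ≤ M * |a| := by
  have := intervalIntegral.norm_integral_le_of_norm_le_const (a := 0) (b := a) (C := M) (f := σ)
    (fun x _ => h.bound x)
  rw [sub_zero] at this
  exact (le_abs_self _).trans this

lemma ph_lower (h : SatF σ L M) (a : ℝ) : σ 1 * (|a| - 1) ≤ ph σ a := by
  have s1 := h.pos 1 one_pos
  rcases le_total |a| 1 with h1 | h1
  · nlinarith [ph_nonneg h a]
  · rw [← ph_even h]
    have e : ph σ |a| = ph σ 1 + ∫ x in (1:ℝ)..|a|, σ x :=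
      (intervalIntegral.integral_add_adjacent_intervals (h.cont.intervalIntegrable _ _)
        (h.cont.intervalIntegrable _ _)).symm
    have : ∫ x in (1:ℝ)..|a|, σ 1 ≤ ∫ x in (1:ℝ)..|a|, σ x :=
      intervalIntegral.integral_mono_on h1 intervalIntegrable_const (h.cont.intervalIntegrable _ _)
        fun x hx => h.mono hx.1
    rw [intervalIntegral.integral_const, smul_eq_mul] at this
    nlinarith [ph_nonneg h 1]

lemma Phi_nonneg (h : SatF σ L M) (z : E2) : 0 ≤ Phi σ z :=
  intervalIntegral.integral_nonneg zero_le_one fun _ _ => ph_nonneg h _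

lemma Phi_le (h : SatF σ L M) (z : E2) : Phi σ z ≤ M * ‖z‖ := by
  have := intervalIntegral.integral_mono_on (a := 0) (b := 1) zero_le_one
    ((continuous_phB h z).intervalIntegrable _ _)
    (intervalIntegrable_const (c := M * ‖z‖) (μ := volume))
    fun s _ => (ph_le h _).trans (mul_le_mul_of_nonneg_left (abs_inner_Bc s z) h.Mpos.le)
  simpa [Phi] using this

lemma Phi_lower (h : SatF σ L M) (z : E2) : σ 1 * (‖z‖ / 2 - 1) ≤ Phi σ z := by
  obtain ⟨i, e⟩ := integral_lower z (σ 1) 1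
  rw [← e]
  refine intervalIntegral.integral_mono_on zero_le_one i ((continuous_phB h z).intervalIntegrable _ _) ?_
  intro s _
  refine le_trans ?_ (ph_lower h _)
  have := h.pos 1 one_pos
  have := sq_div_le s z
  gcongr

lemma corr_abs (h : SatF σ L M) {ε : ℝ} (h0 : 0 < ε) (h1 : ε ≤ 1) (t : ℝ) (z y : E2) :
    |ε * ⟪fv σ z + (2:ℝ) • y, Hc σ (t / ε) z⟫ - 8 * ε * ⟪y, fv σ z⟫| ≤ M ^ 2 + 10 * M * ‖y‖ := by
  have hM := h.Mpos
  have a1 : ‖fv σ z + (2:ℝ) • y‖ ≤ M + 2 * ‖y‖ := by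
    refine (norm_add_le _ _).trans (add_le_add (norm_fv h z) ?_)
    rw [norm_smul]; simp
  have a2 := abs_inner_le a1 (norm_Hc h (t / ε) z)
  have a3 := abs_inner_le (le_refl ‖y‖) (norm_fv h z)
  have e : ε * ⟪fv σ z + (2:ℝ) • y, Hc σ (t / ε) z⟫ - 8 * ε * ⟪y, fv σ z⟫
    = ε * (⟪fv σ z + (2:ℝ) • y, Hc σ (t / ε) z⟫ - 8 * ⟪y, fv σ z⟫) := by ring
  have a4 : |⟪fv σ z + (2:ℝ) • y, Hc σ (t / ε) z⟫ - 8 * ⟪y, fv σ z⟫| ≤ M ^ 2 + 10 * M * ‖y‖ := by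
    rw [abs_le] at *
    constructor <;> nlinarith
  rw [e, abs_mul, abs_of_pos h0]
  nlinarith [abs_nonneg (⟪fv σ z + (2:ℝ) • y, Hc σ (t / ε) z⟫ - 8 * ⟪y, fv σ z⟫)]

lemma Wl_upper (h : SatF σ L M) {ε : ℝ} (h0 : 0 < ε) (h1 : ε ≤ 1) (t : ℝ) (z y : E2) :
    Wl σ ε t z y ≤ ‖y‖ ^ 2 + M * ‖z‖ + M * (‖z‖ + ‖y‖) + (M ^ 2 + 10 * M * ‖y‖) := by
  have a := (abs_le.1 (corr_abs h h0 h1 t z y)).2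
  have b := Phi_le h z
  have c := (Phi_le h (z - y)).trans (mul_le_mul_of_nonneg_left (norm_sub_le z y) h.Mpos.le)
  unfold Wl
  rw [real_inner_self_eq_norm_sq]
  linarith

lemma Wl_lower (h : SatF σ L M) {ε : ℝ} (h0 : 0 < ε) (h1 : ε ≤ 1) (t : ℝ) (z y : E2) :
    ‖y‖ ^ 2 + σ 1 * (‖z‖ / 2 - 1) - (M ^ 2 + 10 * M * ‖y‖) ≤ Wl σ ε t z y := by
  have a := (abs_le.1 (corr_abs h h0 h1 t z y)).1
  have b := Phi_lower h z
  have c := Phi_nonneg h (z - y)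
  unfold Wl
  rw [real_inner_self_eq_norm_sq]
  linarith

lemma modSat_bound (h : SatF σ L M) (ξ : ℝ) : |modSat σ ξ| ≤ M := by
  have hM := h.Mpos
  have := intervalIntegral.norm_integral_le_of_norm_le_const (a := 0) (b := π / 2) (C := M)
    (f := fun v => Real.sin v * σ (ξ * Real.sin v)) ?_
  · unfold modSat
    rw [abs_mul, abs_of_pos (by positivity)]
    have hp : (0:ℝ) < π / 2 := by positivity
    rw [Real.norm_eq_abs, sub_zero, abs_of_pos hp] at this
    calc _ ≤ 2 / π * (M * (π / 2)) := by gcongr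
      _ = M := by field_simp
  · intro v _
    rw [norm_mul]
    calc _ ≤ 1 * M := mul_le_mul (Real.abs_sin_le_one v) (h.bound _) (abs_nonneg _) zero_le_one
      _ = M := one_mul M

lemma modSat_int (h : SatF σ L M) {r : ℝ} (hr : 0 ≤ r) : ∫ ξ in (0:ℝ)..r, modSat σ ξ ≤ M * r := by
  have := intervalIntegral.norm_integral_le_of_norm_le_const (a := 0) (b := r) (C := M) (f := modSat σ)
    (fun x _ => modSat_bound h x)
  rw [sub_zero, abs_of_nonneg hr] at this
  exact (le_abs_self _).trans this

lemma V0_le (h : SatF σ L M) (z y : E2) : V0 σ z y ≤ ‖y‖ ^ 2 + M * ‖z‖ + M * (‖z‖ + ‖y‖) := by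
  have a := modSat_int h (norm_nonneg z)
  have b := (modSat_int h (norm_nonneg (z - y))).trans (mul_le_mul_of_nonneg_left (norm_sub_le z y) h.Mpos.le)
  unfold V0
  linarith

lemma barrier {W : ℝ → ℝ} {R c w0 : ℝ} (hc : 0 < c) (h0 : W 0 = w0)
    (hW : ∀ t, 0 ≤ t → ∃ d, HasDerivAt W d t ∧ (R ≤ W t → d ≤ -c)) :
    ∀ t, (max w0 R - R) / (c / 2) ≤ t → W t ≤ R := by
  choose! W' hd hb using hW
  set T := (max w0 R - R) / (c / 2) with hT
  have hT0 : 0 ≤ T := div_nonneg (sub_nonneg.2 (le_max_right _ _)) (by positivity)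
  have hTc : c / 2 * T = max w0 R - R := by rw [hT]; field_simp
  have hcont : ∀ a b, 0 ≤ a → ContinuousOn W (Set.Icc a b) := fun a b ha x hx =>
    (hd x (ha.trans hx.1)).continuousAt.continuousWithinAt
  have s1 : W T ≤ R := by
    have := image_le_of_deriv_right_lt_deriv_boundary (f := W) (f' := W') (a := 0) (b := T)
      (B := fun s => max w0 R - c / 2 * s) (B' := fun _ => -(c / 2)) (hcont 0 T le_rfl)
      (fun x hx => (hd x hx.1).hasDerivWithinAt) (by simp [h0])
      (fun x => by simpa using ((hasDerivAt_id x).const_mul (c / 2)).const_sub (max w0 R))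
      (fun x hx he => by
        have : c / 2 * x ≤ c / 2 * T := by have := hx.2; gcongr
        have := hb x hx.1 (by linarith)
        linarith) (Set.right_mem_Icc.2 hT0)
    linarith
  intro t ht
  exact image_le_of_deriv_right_lt_deriv_boundary (f := W) (f' := W') (a := T) (b := t)
      (B := fun s => R) (B' := fun _ => 0) (hcont T t hT0)
      (fun x hx => (hd x (hT0.trans hx.1)).hasDerivWithinAt) s1
      (fun x => hasDerivAt_const x R)
      (fun x hx he => by
        have := hb x (hT0.trans hx.1) he.ge
        linarith) (Set.right_mem_Icc.2 ht)

end

/-- Uniform ultimate boundedness for `(T_ε)`: for `ε` small, every solution eventually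
enters and stays in the sublevel set `{V₀ ≤ 2R}`. -/
theorem stmt13 (σ : ℝ → ℝ) (hσ : IsSaturation σ) :
    ∃ ε₀ > 0, ∃ R > 0, ∀ ε : ℝ, 0 < ε → ε < ε₀ → ∀ z₀ y₀ : E2,
      ∃ T₁ : ℝ, 0 ≤ T₁ ∧
        ∀ z y : ℝ → E2, IsSolTeps σ ε z y → z 0 = z₀ → y 0 = y₀ →
          ∀ t : ℝ, T₁ ≤ t → V0 σ (z t) (y t) ≤ 2 * R := by
  obtain ⟨L, M, h⟩ := hσ.satF
  obtain ⟨c, hc, r, hr, Y, hY, hdis⟩ := dissip h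
  have hL := h.Lpos
  have hM := h.Mpos
  have s1 := h.pos 1 one_pos
  set C := 8 * L * M ^ 2 + 10 * M ^ 2 with hC
  have hCp : 0 < C := by positivity
  set R0 := Y ^ 2 + M * r + M * (r + Y) + (M ^ 2 + 10 * M * Y) with hR0
  have hR0p : 0 < R0 := by positivity
  set N := 2 * (R0 + 1 + M ^ 2 + σ 1 + 50 * M ^ 2) with hN
  have hNp : 0 < N := by positivity
  set R := N + M * (N / σ 1) + M * (N / σ 1 + (1 + N)) with hR
  have hRp : 0 < R := by positivity
  refine ⟨min 1 (c / (2 * C)), lt_min one_pos (by positivity), R, hRp, ?_⟩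
  intro ε hε hε0 z₀ y₀
  have hε1 : ε ≤ 1 := (hε0.trans_le (min_le_left _ _)).le
  have hεC : ε * C ≤ c / 2 := by
    have := (hε0.trans_le (min_le_right _ _)).le
    rw [le_div_iff₀ (by positivity)] at this
    linarith
  refine ⟨(max (Wl σ ε 0 z₀ y₀) (R0 + 1) - (R0 + 1)) / (c / 2 / 2),
    div_nonneg (sub_nonneg.2 (le_max_right _ _)) (by positivity), ?_⟩
  intro z y hs hz hy t ht
  have hW := barrier (W := fun t => Wl σ ε t (z t) (y t)) (R := R0 + 1) (c := c / 2)
    (w0 := Wl σ ε 0 z₀ y₀) (by positivity) (by simp [hz, hy]) ?_ t ht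
  · have hlow := Wl_lower h hε hε1 t (z t) (y t)
    have hV := V0_le h (z t) (y t)
    have hzn := norm_nonneg (z t)
    have hyn := norm_nonneg (y t)
    have k1 : ‖y t‖ ^ 2 / 2 + σ 1 * (‖z t‖ / 2) ≤ N / 2 := by
      nlinarith [sq_nonneg (‖y t‖ - 10 * M)]
    have k0 : 0 ≤ σ 1 * ‖z t‖ := by positivity
    have k2 : ‖y t‖ ^ 2 ≤ N := by nlinarith
    have k3 : ‖z t‖ ≤ N / σ 1 := by
      rw [le_div_iff₀ s1]; nlinarith [sq_nonneg ‖y t‖]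
    have k4 : ‖y t‖ ≤ 1 + N := by nlinarith [sq_nonneg (‖y t‖ - 1)]
    have : V0 σ (z t) (y t) ≤ R := by
      refine hV.trans ?_
      rw [hR]
      gcongr
    linarith
  · intro t ht
    obtain ⟨d, hd, hle⟩ := Wl_deriv h hε hs ht
    refine ⟨d, hd, fun hge => ?_⟩
    have hor : r ≤ ‖z t‖ ∨ Y ≤ ‖y t‖ := by
      by_contra hcon
      push Not at hcon
      obtain ⟨q1, q2⟩ := hcon
      have := Wl_upper h hε hε1 t (z t) (y t)
      have : ‖y t‖ ^ 2 + M * ‖z t‖ + M * (‖z t‖ + ‖y t‖) + (M ^ 2 + 10 * M * ‖y t‖) ≤ R0 := by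
        rw [hR0]; gcongr
      linarith
    have := hdis _ _ hor
    linarith
end
end

section
/- Let σ be a saturation function and V₀(z,y) = ‖y‖² + ∫₀^{‖z‖} S(ξ)dξ + ∫₀^{‖z−y‖} S(ξ)dξ. There exist ε₀>0 and C>0 such that for every ε∈(0,ε₀) and every (z₀,y₀)∈ℝ²×ℝ², there exists a time T₂(z₀,y₀)≥0 with the following property: for every T with 1/2 ≤ T ≤ 2 and T/ε an integer, the solution (z(t),y(t)) of (T_ε) with (z(0),y(0))=(z₀,y₀) satisfies V₀(z(T₂+T),y(T₂+T)) − V₀(z(T₂),y(T₂)) ≤ −C·∫_{T₂}^{T₂+T} [‖y(t)‖² + (b_ε(t)ᵀz(t))²] dt, where T₂ = T₂(z₀,y₀). -/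
open Real Filter MeasureTheory intervalIntegral RealInnerProductSpace

noncomputable section

/-- Working form of the saturation hypotheses. -/
structure SatC (σ : ℝ → ℝ) (L M : ℝ) : Prop where
  odd : ∀ x, σ (-x) = - σ x
  lip : ∀ a b, |σ a - σ b| ≤ L * |a - b|
  bdd : ∀ a, |σ a| ≤ M
  mono : Monotone σ
  pos : ∀ x, 0 < x → 0 < σ x
  conc : ConcaveOn ℝ (Set.Ici 0) σ
  Lpos : 0 < L
  Mpos : 0 < M

theorem IsSaturation.satC {σ : ℝ → ℝ} (h : IsSaturation σ) : ∃ L M, SatC σ L M := by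
  obtain ⟨hodd, ⟨L, hL⟩, hpos, ⟨l, hl, hlim⟩, -, hmono, hdiff, hanti⟩ := h
  have hle : ∀ a, σ a ≤ l := fun a => hmono.ge_of_tendsto hlim a
  refine ⟨L + 1, l, hodd, ?_, ?_, hmono, ?_, ?_, by positivity, hl⟩
  · intro a b
    have := hL.dist_le_mul a b
    rw [Real.dist_eq, Real.dist_eq] at this
    nlinarith [abs_nonneg (a - b)]
  · intro a
    rw [abs_le]
    exact ⟨by have := hle (-a); rw [hodd] at this; linarith, hle a⟩
  · intro x hx
    have := hpos x hx.ne'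
    by_contra hc
    push Not at hc
    nlinarith
  · refine AntitoneOn.concaveOn_of_deriv (convex_Ici 0) hL.continuous.continuousOn ?_ ?_
    · rwa [interior_Ici]
    · rwa [interior_Ici]

namespace SatC
variable {σ : ℝ → ℝ} {L M : ℝ}

theorem zero (h : SatC σ L M) : σ 0 = 0 := by
  have := h.odd 0
  simp at this
  linarith

theorem cont (h : SatC σ L M) : Continuous σ := by
  have : LipschitzWith ⟨L, h.Lpos.le⟩ σ := LipschitzWith.of_dist_le_mul fun a b => by
    rw [Real.dist_eq, Real.dist_eq]; exact h.lip a b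
  exact this.continuous

theorem coco (h : SatC σ L M) (a b : ℝ) :
    (σ a - σ b) ^ 2 ≤ L * ((σ a - σ b) * (a - b)) := by
  have h1 := h.lip a b
  rcases le_total a b with hab | hab
  · have h2 := h.mono hab
    rw [abs_of_nonpos (by linarith), abs_of_nonpos (by linarith)] at h1
    nlinarith
  · have h2 := h.mono hab
    rw [abs_of_nonneg (by linarith), abs_of_nonneg (by linarith)] at h1
    nlinarith

theorem mono_mul (h : SatC σ L M) (a q : ℝ) : 0 ≤ q * (σ a - σ (a - q)) := by
  rcases le_total 0 q with hq | hq
  · exact mul_nonneg hq (by have := h.mono (show a - q ≤ a by linarith); linarith)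
  · exact mul_nonneg_of_nonpos_of_nonpos hq
      (by have := h.mono (show a ≤ a - q by linarith); linarith)

theorem nonneg (h : SatC σ L M) {x : ℝ} (hx : 0 ≤ x) : 0 ≤ σ x := by
  have := h.mono hx; rwa [h.zero] at this

theorem ratio (h : SatC σ L M) {x r : ℝ} (hr : 0 < r) (hx : |x| ≤ r) :
    σ r / r * x ^ 2 ≤ σ x * x := by
  have key : ∀ y, 0 ≤ y → y ≤ r → σ r / r * y ≤ σ y := by
    intro y hy hyr
    have := h.conc.2 (show (0:ℝ) ∈ Set.Ici 0 by simp) (show r ∈ Set.Ici 0 from hr.le)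
      (show 0 ≤ 1 - y / r by rw [sub_nonneg, div_le_one hr]; exact hyr)
      (show 0 ≤ y / r by positivity) (by ring)
    simp only [smul_eq_mul, h.zero, mul_zero, zero_add] at this
    rw [div_mul_cancel₀ _ hr.ne'] at this
    calc σ r / r * y = y / r * σ r := by ring
      _ ≤ _ := this
  rcases le_total 0 x with h0 | h0
  · rw [abs_of_nonneg h0] at hx
    nlinarith [key x h0 hx]
  · rw [abs_of_nonpos h0] at hx
    have := key (-x) (by linarith) hx
    rw [h.odd] at this
    nlinarith

theorem slope (h : SatC σ L M) : ∃ δ > 0, ∃ m > 0, ∀ a b, 0 ≤ a → a ≤ b → b ≤ δ →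
    m * (b - a) ≤ σ b - σ a := by
  obtain ⟨δ, hδ, hδ1, hlt⟩ : ∃ δ > 0, δ < 1 ∧ σ δ < σ 1 := by
    refine ⟨min (1/2) (σ 1 / (2 * L)), ?_, ?_, ?_⟩
    · have := h.pos 1 one_pos; have := h.Lpos; positivity
    · exact (min_le_left _ _).trans_lt (by norm_num)
    · have h1 := h.pos 1 one_pos
      have hL := h.Lpos
      have h2 := h.lip (min (1/2) (σ 1 / (2 * L))) 0
      have h3 : 0 < min (1/2) (σ 1 / (2 * L)) := by positivity
      rw [h.zero, sub_zero, sub_zero, abs_of_pos h3, abs_of_pos (h.pos _ h3)] at h2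
      have h4 : L * min (1/2) (σ 1 / (2 * L)) ≤ L * (σ 1 / (2 * L)) :=
        mul_le_mul_of_nonneg_left (min_le_right _ _) hL.le
      have h5 : L * (σ 1 / (2 * L)) = σ 1 / 2 := by field_simp
      linarith
  refine ⟨δ, hδ, (σ 1 - σ δ) / (1 - δ), div_pos (by linarith) (by linarith), ?_⟩
  intro a b ha hab hb
  rcases hab.eq_or_lt with rfl | hab
  · simp
  have hm : (σ 1 - σ δ) / (1 - δ) ≤ (σ b - σ a) / (b - a) := by
    have s1 := h.conc.slope_anti_adjacent (x := a) (y := b) (z := 1) ha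
      (show (0:ℝ) ≤ 1 by norm_num) hab (by linarith)
    refine le_trans ?_ s1
    rcases hb.eq_or_lt with rfl | hb
    · exact le_rfl
    · have s2 := h.conc.slope_anti_adjacent (x := b) (y := δ) (z := 1)
        (show (0:ℝ) ≤ b by linarith) (show (0:ℝ) ≤ 1 by norm_num) hb hδ1
      rw [div_le_div_iff₀ (by linarith) (by linarith)] at s2 ⊢
      nlinarith
  rwa [le_div_iff₀ (by linarith)] at hm

theorem S_cont (h : SatC σ L M) : Continuous (modSat σ) := by
  unfold modSat
  refine continuous_const.mul ?_
  have := h.cont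
  apply intervalIntegral.continuous_parametric_intervalIntegral_of_continuous'
  fun_prop

theorem S_zero (h : SatC σ L M) : modSat σ 0 = 0 := by
  simp [modSat, h.zero]

theorem S_inc (h : SatC σ L M) (R : ℝ) : ∃ c > 0, ∀ a b, 0 ≤ a → a ≤ b → b ≤ R →
    c * (b - a) ≤ modSat σ b - modSat σ a := by
  obtain ⟨δ, hδ, m, hm, hs⟩ := h.slope
  have hc := h.cont
  set R' := max R 1
  have hR' : 0 < R' := by positivity
  set v0 := min (δ / R') (π / 2)
  have hv0 : 0 < v0 := by positivity
  have hI : 0 < ∫ v in (0:ℝ)..v0, sin v * (m * sin v) := by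
    apply intervalIntegral_pos_of_pos_on
    · apply Continuous.intervalIntegrable; fun_prop
    · intro x hx
      have : 0 < sin x := sin_pos_of_pos_of_lt_pi hx.1
        (by have := hx.2; have := min_le_right (δ / R') (π / 2); have := pi_pos; linarith)
      positivity
    · exact hv0
  refine ⟨2 / π * ∫ v in (0:ℝ)..v0, sin v * (m * sin v), by positivity, ?_⟩
  intro a b ha hab hb
  unfold modSat
  rw [← mul_sub, mul_assoc]
  refine mul_le_mul_of_nonneg_left ?_ (by positivity)
  have ii : ∀ (g : ℝ → ℝ) (p q : ℝ), Continuous g → IntervalIntegrable g volume p q :=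
    fun g p q hg => hg.intervalIntegrable p q
  rw [← integral_sub (ii _ _ _ (by fun_prop)) (ii _ _ _ (by fun_prop)),
    ← intervalIntegral.integral_mul_const]
  have hle : v0 ≤ π / 2 := min_le_right _ _
  rw [← integral_add_adjacent_intervals (b := v0)
    (ii (fun v => sin v * σ (b * sin v) - sin v * σ (a * sin v)) 0 v0 (by fun_prop))
    (ii _ v0 (π / 2) (by fun_prop))]
  have h1 : (∫ v in (0:ℝ)..v0, sin v * (m * sin v) * (b - a)) ≤
      ∫ v in (0:ℝ)..v0, (sin v * σ (b * sin v) - sin v * σ (a * sin v)) := by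
    apply integral_mono_on hv0.le (ii _ _ _ (by fun_prop)) (ii _ _ _ (by fun_prop))
    intro x hx
    have hsn : 0 ≤ sin x := sin_nonneg_of_nonneg_of_le_pi hx.1 (by linarith [hx.2, pi_pos])
    have hxs : sin x ≤ δ / R' := (sin_le hx.1).trans (hx.2.trans (min_le_left _ _))
    have := hs (a * sin x) (b * sin x) (by positivity)
      (mul_le_mul_of_nonneg_right hab hsn) (by
        calc b * sin x ≤ R' * (δ / R') := by
              apply mul_le_mul (hb.trans (le_max_left _ _)) hxs hsn hR'.le
          _ = δ := by field_simp)
    nlinarith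
  have h2 : 0 ≤ ∫ v in v0..(π/2), (sin v * σ (b * sin v) - sin v * σ (a * sin v)) := by
    apply integral_nonneg hle
    intro x hx
    have hsn : 0 ≤ sin x := sin_nonneg_of_nonneg_of_le_pi (hv0.le.trans hx.1)
      (by linarith [hx.2, pi_pos])
    have := h.mono (mul_le_mul_of_nonneg_right hab hsn)
    nlinarith
  linarith

theorem S_mono (h : SatC σ L M) {a b : ℝ} (ha : 0 ≤ a) (hab : a ≤ b) :
    modSat σ a ≤ modSat σ b := by
  obtain ⟨c, hc, H⟩ := h.S_inc b
  nlinarith [H a b ha hab le_rfl]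

theorem S_nonneg (h : SatC σ L M) {a : ℝ} (ha : 0 ≤ a) : 0 ≤ modSat σ a := by
  have := h.S_mono le_rfl ha
  rwa [h.S_zero] at this

theorem S_pos (h : SatC σ L M) {a : ℝ} (ha : 0 < a) : 0 < modSat σ a := by
  obtain ⟨c, hc, H⟩ := h.S_inc a
  have := H 0 a le_rfl ha.le le_rfl
  rw [h.S_zero] at this
  nlinarith

end SatC

theorem fvec_eq (σ : ℝ → ℝ) (z : E2) : fvec σ z = (modSat σ ‖z‖ / ‖z‖) • z := by
  unfold fvec
  split_ifs with h
  · simp [h]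
  · rfl

theorem inner_bvp (ε t : ℝ) (v : E2) :
    ⟪bvp ε t, v⟫ = sin (2 * π * t / ε) * v 0 + cos (2 * π * t / ε) * v 1 := by
  simp [bvp, PiLp.inner_apply, Fin.sum_univ_two, mul_comm]

theorem norm_bvp (ε t : ℝ) : ‖bvp ε t‖ = 1 := by
  rw [EuclideanSpace.norm_eq]
  simp [bvp, Fin.sum_univ_two]

theorem abs_inner_bvp_le (ε t : ℝ) (v : E2) : |⟪bvp ε t, v⟫| ≤ ‖v‖ := by
  have := abs_real_inner_le_norm (bvp ε t) v
  rwa [norm_bvp, one_mul] at this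

theorem continuous_bvp (ε : ℝ) : Continuous (bvp ε) := by
  have : bvp ε = fun t => WithLp.toLp 2 ![sin (2 * π * t / ε), cos (2 * π * t / ε)] := rfl
  rw [this]
  refine (PiLp.continuous_toLp 2 _).comp ?_
  refine continuous_pi fun i => ?_
  fin_cases i <;> simp <;> fun_prop

/-- Averages over a period of a function of the angle. -/
theorem period_avg {g : ℝ → ℝ} (hg : Function.Periodic g (2 * π)) {ε : ℝ} (hε : 0 < ε) (t : ℝ) :
    ∫ s in t..(t + ε), g (2 * π * s / ε) = ε / (2 * π) * ∫ θ in (0:ℝ)..(2 * π), g θ := by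
  have hp := pi_pos
  have h1 : ∀ s, g (2 * π * s / ε) = g ((2 * π / ε) * s) := fun s => by ring_nf
  simp_rw [h1]
  rw [intervalIntegral.integral_comp_mul_left _ (by positivity : (2 * π / ε) ≠ 0)]
  have h2 : 2 * π / ε * (t + ε) = 2 * π / ε * t + 2 * π := by field_simp
  rw [h2, hg.intervalIntegral_add_eq _ 0, zero_add, smul_eq_mul, inv_div]

theorem int_sin_odd {σ : ℝ → ℝ} (r : ℝ) :
    ∫ θ in (0:ℝ)..(2 * π), sin θ * σ (r * cos θ) = 0 := by
  have hper : Function.Periodic (fun θ => sin θ * σ (r * cos θ)) (2 * π) := by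
    intro x; simp
  have := hper.intervalIntegral_add_eq 0 (-π)
  rw [zero_add] at this
  rw [this, show -π + 2 * π = π by ring]
  have h2 := intervalIntegral.integral_comp_neg (a := -π) (b := π)
    (fun θ => sin θ * σ (r * cos θ))
  simp only [sin_neg, cos_neg, neg_neg, neg_mul, intervalIntegral.integral_neg] at h2
  linarith

theorem int_cos {σ : ℝ → ℝ} {L M : ℝ} (h : SatC σ L M) (r : ℝ) :
    ∫ θ in (0:ℝ)..(2 * π), cos θ * σ (r * cos θ) = 2 * π * modSat σ r := by
  have hc := h.cont
  have hp := pi_pos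
  set G : ℝ → ℝ := fun θ => sin θ * σ (r * sin θ) with hG
  have hGc : Continuous G := by fun_prop
  have ii : ∀ p q, IntervalIntegrable G volume p q := fun p q => hGc.intervalIntegrable p q
  have hper : Function.Periodic G (2 * π) := by
    intro x; simp [hG]
  have h1 : ∫ θ in (0:ℝ)..(2 * π), cos θ * σ (r * cos θ) = ∫ θ in (0:ℝ)..(2 * π), G θ := by
    have := intervalIntegral.integral_comp_add_right (a := 0) (b := 2 * π) G (π / 2)
    simp only [hG, sin_add_pi_div_two] at this
    rw [this, show 2 * π + π / 2 = (0 + π / 2) + 2 * π by ring]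
    have h2 := hper.intervalIntegral_add_eq (0 + π / 2) 0
    rw [zero_add (2 * π)] at h2
    exact h2
  have h2 : ∫ θ in π..(2 * π), G θ = ∫ θ in (0:ℝ)..π, G θ := by
    have := intervalIntegral.integral_comp_add_right (a := 0) (b := π) G π
    rw [zero_add, ← two_mul] at this
    rw [← this]
    apply intervalIntegral.integral_congr
    intro x _
    simp only [hG, sin_add_pi, mul_neg, h.odd]
    ring
  have h3 : ∫ θ in (π/2)..π, G θ = ∫ θ in (0:ℝ)..(π/2), G θ := by
    have := intervalIntegral.integral_comp_sub_left (a := 0) (b := π / 2) G π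
    rw [sub_zero, show π - π / 2 = π / 2 by ring] at this
    rw [← this]
    apply intervalIntegral.integral_congr
    intro x _
    simp only [hG, sin_pi_sub]
  rw [h1, ← integral_add_adjacent_intervals (ii 0 π) (ii π (2 * π)), h2,
    ← integral_add_adjacent_intervals (ii 0 (π/2)) (ii (π/2) π), h3]
  change _ = 2 * π * (2 / π * ∫ θ in (0:ℝ)..(π/2), G θ)
  generalize (∫ θ in (0:ℝ)..(π/2), G θ) = I
  field_simp
  ring

theorem polar (z : E2) : ∃ α : ℝ, z 0 = ‖z‖ * sin α ∧ z 1 = ‖z‖ * cos α := by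
  set c : ℂ := ⟨z 1, z 0⟩
  have hn : ‖c‖ = ‖z‖ := by
    rw [EuclideanSpace.norm_eq, Complex.norm_def, Complex.normSq_apply, Fin.sum_univ_two]
    simp only [Real.norm_eq_abs, sq_abs]
    congr 1
    simp only [c]; ring
  refine ⟨c.arg, ?_, ?_⟩
  · rw [← hn, Complex.norm_mul_sin_arg]
  · rw [← hn, Complex.norm_mul_cos_arg]

theorem avg_f {σ : ℝ → ℝ} {L M : ℝ} (h : SatC σ L M) {ε : ℝ} (hε : 0 < ε) (t : ℝ) (z v : E2) :
    ∫ s in t..(t + ε), ⟪bvp ε s, v⟫ * σ ⟪bvp ε s, z⟫ = ε * ⟪fvec σ z, v⟫ := by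
  have hc := h.cont
  have hp := pi_pos
  obtain ⟨α, hα0, hα1⟩ := polar z
  set r := ‖z‖ with hr
  set g : ℝ → ℝ := fun θ => (sin θ * v 0 + cos θ * v 1) * σ (sin θ * z 0 + cos θ * z 1) with hg
  have hper : Function.Periodic g (2 * π) := by intro x; simp [hg]
  have h1 : ∫ s in t..(t + ε), ⟪bvp ε s, v⟫ * σ ⟪bvp ε s, z⟫ =
      ∫ s in t..(t + ε), g (2 * π * s / ε) := by
    apply intervalIntegral.integral_congr
    intro s _
    simp only [hg, inner_bvp]
  rw [h1, period_avg hper hε]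
  have h2 : ∫ θ in (0:ℝ)..(2 * π), g θ = ∫ θ in (0:ℝ)..(2 * π), g (θ + α) := by
    rw [intervalIntegral.integral_comp_add_right, add_comm (2 * π), zero_add,
      hper.intervalIntegral_add_eq α 0, zero_add]
  have h3 : ∀ θ, g (θ + α) = (sin α * v 0 + cos α * v 1) * (cos θ * σ (r * cos θ)) +
      (cos α * v 0 - sin α * v 1) * (sin θ * σ (r * cos θ)) := by
    intro θ
    have : sin (θ + α) * z 0 + cos (θ + α) * z 1 = r * cos θ := by
      rw [hα0, hα1, sin_add, cos_add]
      linear_combination (r * cos θ) * sin_sq_add_cos_sq α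
    simp only [hg, this]
    rw [sin_add, cos_add]; ring
  rw [h2]
  simp_rw [h3]
  rw [intervalIntegral.integral_add (Continuous.intervalIntegrable (by fun_prop) _ _)
    (Continuous.intervalIntegrable (by fun_prop) _ _), intervalIntegral.integral_const_mul,
    intervalIntegral.integral_const_mul, int_cos h, int_sin_odd]
  rw [fvec_eq, real_inner_smul_left, PiLp.inner_apply, Fin.sum_univ_two, ← hr]
  simp only [RCLike.inner_apply, conj_trivial]
  rw [hα0, hα1]
  rcases eq_or_ne r 0 with h0 | h0
  · rw [h0, h.S_zero]; simp
  · field_simp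
    ring

theorem avg_sq {ε : ℝ} (hε : 0 < ε) (t : ℝ) (v : E2) :
    ∫ s in t..(t + ε), ⟪bvp ε s, v⟫ ^ 2 = ε / 2 * ‖v‖ ^ 2 := by
  have hp := pi_pos
  set g : ℝ → ℝ := fun θ => (sin θ * v 0 + cos θ * v 1) ^ 2 with hg
  have hper : Function.Periodic g (2 * π) := by intro x; simp [hg]
  have h1 : ∫ s in t..(t + ε), ⟪bvp ε s, v⟫ ^ 2 =
      ∫ s in t..(t + ε), g (2 * π * s / ε) := by
    apply intervalIntegral.integral_congr
    intro s _
    simp only [hg, inner_bvp]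
  rw [h1, period_avg hper hε]
  have h3 : ∀ θ, g θ = v 0 ^ 2 * sin θ ^ 2 + 2 * v 0 * v 1 * (sin θ * cos θ)
      + v 1 ^ 2 * cos θ ^ 2 := by
    intro θ; simp only [hg]; ring
  simp_rw [h3]
  rw [intervalIntegral.integral_add (Continuous.intervalIntegrable (by fun_prop) _ _)
    (Continuous.intervalIntegrable (by fun_prop) _ _),
    intervalIntegral.integral_add (Continuous.intervalIntegrable (by fun_prop) _ _)
    (Continuous.intervalIntegrable (by fun_prop) _ _), intervalIntegral.integral_const_mul,
    intervalIntegral.integral_const_mul, intervalIntegral.integral_const_mul,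
    integral_sin_sq, integral_cos_sq, integral_sin_mul_cos₁]
  rw [EuclideanSpace.norm_sq_eq, Fin.sum_univ_two]
  simp
  field_simp
  try ring

section dyn
variable {σ : ℝ → ℝ} {L M : ℝ}

theorem f_zero (σ : ℝ → ℝ) : fvec σ 0 = 0 := by simp [fvec]

theorem f_avg (h : SatC σ L M) (z v : E2) :
    ⟪fvec σ z, v⟫ = ∫ s in (0:ℝ)..1, ⟪bvp 1 s, v⟫ * σ ⟪bvp 1 s, z⟫ := by
  have := avg_f h one_pos 0 z v
  rw [zero_add, one_mul] at this
  exact this.symm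

theorem cont_bs (h : SatC σ L M) (ε : ℝ) (z v : E2) :
    Continuous fun s => ⟪bvp ε s, v⟫ * σ ⟪bvp ε s, z⟫ := by
  have h1 := h.cont
  have h2 := continuous_bvp ε
  fun_prop

theorem f_avg_sub (h : SatC σ L M) (z w v : E2) :
    ⟪fvec σ z - fvec σ w, v⟫ =
      ∫ s in (0:ℝ)..1, ⟪bvp 1 s, v⟫ * (σ ⟪bvp 1 s, z⟫ - σ ⟪bvp 1 s, w⟫) := by
  rw [inner_sub_left, f_avg h, f_avg h, ← intervalIntegral.integral_sub
    ((cont_bs h 1 z v).intervalIntegrable _ _) ((cont_bs h 1 w v).intervalIntegrable _ _)]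
  simp_rw [mul_sub]

theorem f_ge (h : SatC σ L M) {z w v : E2} {c : ℝ}
    (H : ∀ s, c ≤ ⟪bvp 1 s, v⟫ * (σ ⟪bvp 1 s, z⟫ - σ ⟪bvp 1 s, w⟫)) :
    c ≤ ⟪fvec σ z - fvec σ w, v⟫ := by
  rw [f_avg_sub h]
  have hc : Continuous fun s => ⟪bvp 1 s, v⟫ * (σ ⟪bvp 1 s, z⟫ - σ ⟪bvp 1 s, w⟫) := by
    simp_rw [mul_sub]
    exact (cont_bs h 1 z v).sub (cont_bs h 1 w v)
  have := intervalIntegral.integral_mono_on (a := 0) (b := 1) (by norm_num)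
    ((continuous_const (y := c)).intervalIntegrable (μ := volume) 0 1)
    (hc.intervalIntegrable 0 1) (fun s _ => H s)
  simpa using this

theorem f_le (h : SatC σ L M) {z w v : E2} {c : ℝ}
    (H : ∀ s, ⟪bvp 1 s, v⟫ * (σ ⟪bvp 1 s, z⟫ - σ ⟪bvp 1 s, w⟫) ≤ c) :
    ⟪fvec σ z - fvec σ w, v⟫ ≤ c := by
  have := f_ge h (z := w) (w := z) (v := v) (c := -c) (fun s => by linarith [H s])
  rw [← neg_sub, inner_neg_left] at this
  linarith

theorem f_lip (h : SatC σ L M) (z w : E2) : ‖fvec σ z - fvec σ w‖ ≤ L * ‖z - w‖ := by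
  set v := fvec σ z - fvec σ w with hv
  have h1 : ⟪fvec σ z - fvec σ w, v⟫ ≤ ‖v‖ * (L * ‖z - w‖) := by
    apply f_le h
    intro s
    refine (le_abs_self _).trans ?_
    rw [abs_mul]
    refine mul_le_mul (abs_inner_bvp_le _ _ _) ?_ (abs_nonneg _) (norm_nonneg _)
    refine (h.lip _ _).trans (mul_le_mul_of_nonneg_left ?_ h.Lpos.le)
    rw [← inner_sub_right]
    exact abs_inner_bvp_le _ _ _
  rw [← hv, real_inner_self_eq_norm_mul_norm] at h1
  rcases (norm_nonneg v).eq_or_lt with h0 | h0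
  · rw [← h0]; have := h.Lpos; positivity
  · exact le_of_mul_le_mul_left h1 h0

theorem f_bdd (h : SatC σ L M) (z : E2) : ‖fvec σ z‖ ≤ M := by
  set v := fvec σ z with hv
  have h1 : ⟪fvec σ z - fvec σ 0, v⟫ ≤ ‖v‖ * M := by
    apply f_le h
    intro s
    refine (le_abs_self _).trans ?_
    rw [abs_mul]
    refine mul_le_mul (abs_inner_bvp_le _ _ _) ?_ (abs_nonneg _) (norm_nonneg _)
    rw [inner_zero_right, h.zero, sub_zero]
    exact h.bdd _
  rw [f_zero, sub_zero, ← hv, real_inner_self_eq_norm_mul_norm] at h1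
  rcases (norm_nonneg v).eq_or_lt with h0 | h0
  · rw [← h0]; exact h.Mpos.le
  · exact le_of_mul_le_mul_left h1 h0

theorem f_cont (h : SatC σ L M) : Continuous (fvec σ) := by
  have : LipschitzWith ⟨L, h.Lpos.le⟩ (fvec σ) := LipschitzWith.of_dist_le_mul fun a b => by
    rw [dist_eq_norm, dist_eq_norm]; exact f_lip h a b
  exact this.continuous

/-- The potential of `fvec`. -/
def Fpot (σ : ℝ → ℝ) (z : E2) : ℝ := ∫ ξ in (0:ℝ)..‖z‖, modSat σ ξ

theorem norm_f (h : SatC σ L M) (z : E2) : ‖fvec σ z‖ = modSat σ ‖z‖ := by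
  rw [fvec_eq, norm_smul, Real.norm_eq_abs, abs_of_nonneg
    (div_nonneg (h.S_nonneg (norm_nonneg _)) (norm_nonneg _))]
  rcases eq_or_ne z 0 with rfl | hz
  · simp [h.S_zero]
  · rw [div_mul_cancel₀ _ (norm_ne_zero_iff.2 hz)]

theorem S_le (h : SatC σ L M) {r : ℝ} (hr : 0 ≤ r) : modSat σ r ≤ L * r := by
  have h1 := norm_f h (r • (EuclideanSpace.single 0 1 : E2))
  have h2 := f_lip h (r • (EuclideanSpace.single 0 1 : E2)) 0
  rw [f_zero, sub_zero, sub_zero, h1] at h2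
  simpa [norm_smul, abs_of_nonneg hr] using h2

theorem Fpot_nonneg (h : SatC σ L M) (z : E2) : 0 ≤ Fpot σ z :=
  intervalIntegral.integral_nonneg (norm_nonneg _) fun _ hx => h.S_nonneg hx.1

theorem Fpot_deriv (h : SatC σ L M) {z : ℝ → E2} {z' : E2} {t : ℝ} (hz : HasDerivAt z z' t) :
    HasDerivAt (fun t => Fpot σ (z t)) ⟪fvec σ (z t), z'⟫ t := by
  rcases eq_or_ne (z t) 0 with h0 | h0
  · rw [h0, f_zero, inner_zero_left]
    have hF : ∀ x, ‖Fpot σ x‖ ≤ L * ‖x‖ ^ 2 := by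
      intro x
      have : ‖∫ ξ in (0:ℝ)..‖x‖, modSat σ ξ‖ ≤ (L * ‖x‖) * |‖x‖ - 0| := by
        apply intervalIntegral.norm_integral_le_of_norm_le_const
        intro ξ hξ
        rw [Set.uIoc_of_le (norm_nonneg _)] at hξ
        rw [Real.norm_eq_abs, abs_of_nonneg (h.S_nonneg hξ.1.le)]
        exact (S_le h hξ.1.le).trans (mul_le_mul_of_nonneg_left hξ.2 h.Lpos.le)
      rw [sub_zero, abs_of_nonneg (norm_nonneg _)] at this
      calc _ ≤ _ := this
        _ = _ := by ring
    rw [hasDerivAt_iff_isLittleO]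
    have h1 : (fun t' => z t') =O[nhds t] fun t' => t' - t := by
      have := hz.isBigO_sub
      simpa [h0] using this
    have h2 : (fun t' => Fpot σ (z t')) =O[nhds t] fun t' => (t' - t) ^ 2 := by
      refine (Asymptotics.IsBigO.of_bound L ?_).trans (h1.norm_left.pow 2)
      filter_upwards with x
      rw [norm_pow, norm_norm]
      exact hF _
    have h3 : (fun t' : ℝ => (t' - t) ^ 2) =o[nhds t] fun t' => t' - t := by
      have : (fun t' : ℝ => (t' - t) * (t' - t)) =o[nhds t] fun t' => (1:ℝ) * (t' - t) := by
        refine Asymptotics.IsLittleO.mul_isBigO ?_ (Asymptotics.isBigO_refl _ _)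
        rw [Asymptotics.isLittleO_one_iff]
        have : Continuous fun t' : ℝ => t' - t := by fun_prop
        simpa using this.tendsto t
      simpa [sq] using this
    have h4 : Fpot σ (z t) = 0 := by rw [h0]; simp [Fpot]
    simpa [h0, Fpot] using h2.trans_isLittleO h3
  · have h1 : HasDerivAt (fun t => ‖z t‖) (⟪z t, z'⟫ / ‖z t‖) t := by
      have h2 := (hz.norm_sq).sqrt (by positivity)
      have h3 : (fun t => √(‖z t‖ ^ 2)) = fun t => ‖z t‖ := by
        funext t; exact Real.sqrt_sq (norm_nonneg _)
      have h4 : √(‖z t‖ ^ 2) = ‖z t‖ := Real.sqrt_sq (norm_nonneg _)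
      rw [h3, h4] at h2
      convert h2 using 1
      field_simp
    have h2 : HasDerivAt (fun r => ∫ ξ in (0:ℝ)..r, modSat σ ξ) (modSat σ ‖z t‖) ‖z t‖ :=
      intervalIntegral.integral_hasDerivAt_right (h.S_cont.intervalIntegrable _ _)
        (h.S_cont.stronglyMeasurableAtFilter _ _) h.S_cont.continuousAt
    have h3 := h2.comp t h1
    have h4 : ⟪fvec σ (z t), z'⟫ = modSat σ ‖z t‖ * (⟪z t, z'⟫ / ‖z t‖) := by
      rw [fvec_eq, real_inner_smul_left]
      ring
    rw [h4]
    exact h3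

theorem f_mono (h : SatC σ L M) (z y : E2) : 0 ≤ ⟪fvec σ z - fvec σ (z - y), y⟫ := by
  apply f_ge h
  intro s
  rw [inner_sub_right]
  exact h.mono_mul _ _

/-- Strong monotonicity on balls. -/
theorem f_smono (h : SatC σ L M) (R : ℝ) : ∃ c > 0, ∀ z w : E2, ‖z‖ ≤ R → ‖w‖ ≤ R →
    c * ‖z - w‖ ^ 2 ≤ ⟪fvec σ z - fvec σ w, z - w⟫ := by
  obtain ⟨c, hc, H⟩ := h.S_inc R
  refine ⟨c, hc, fun z w hz hw => ?_⟩
  have key : ∀ x : E2, ‖x‖ ≤ R → ∃ p, c ≤ p ∧ p * ‖x‖ = modSat σ ‖x‖ ∧ fvec σ x = p • x := by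
    intro x hx
    rcases eq_or_ne x 0 with rfl | h0
    · exact ⟨c, le_rfl, by simp [h.S_zero], by simp [f_zero]⟩
    · have hn : 0 < ‖x‖ := norm_pos_iff.2 h0
      refine ⟨_, ?_, div_mul_cancel₀ _ hn.ne', fvec_eq σ x⟩
      rw [le_div_iff₀ hn]
      have := H 0 ‖x‖ le_rfl hn.le hx
      simpa [h.S_zero] using this
  obtain ⟨p, hp, hpz, hfz⟩ := key z hz
  obtain ⟨q, hq, hqw, hfw⟩ := key w hw
  have e1 : ⟪fvec σ z - fvec σ w, z - w⟫ =
      (modSat σ ‖z‖ - modSat σ ‖w‖) * (‖z‖ - ‖w‖) + (p + q) * (‖z‖ * ‖w‖ - ⟪z, w⟫) := by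
    rw [hfz, hfw, ← hpz, ← hqw]
    simp only [inner_sub_left, inner_sub_right, real_inner_smul_left,
      real_inner_self_eq_norm_mul_norm, real_inner_comm z w]
    ring
  have e2 : ‖z - w‖ ^ 2 = (‖z‖ - ‖w‖) ^ 2 + 2 * (‖z‖ * ‖w‖ - ⟪z, w⟫) := by
    rw [norm_sub_sq_real]; ring
  have e3 : 0 ≤ ‖z‖ * ‖w‖ - ⟪z, w⟫ := by linarith [real_inner_le_norm z w]
  have e4 : c * (‖z‖ - ‖w‖) ^ 2 ≤ (modSat σ ‖z‖ - modSat σ ‖w‖) * (‖z‖ - ‖w‖) := by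
    rcases le_total ‖z‖ ‖w‖ with hl | hl
    · nlinarith [H _ _ (norm_nonneg z) hl hw]
    · nlinarith [H _ _ (norm_nonneg w) hl hz]
  rw [e1, e2]
  nlinarith

variable {ε : ℝ} {z y : ℝ → E2}

theorem sol_contz (hs : IsSolTeps σ ε z y) : ContinuousOn z (Set.Ici 0) :=
  fun t ht => (hs t ht).1.continuousAt.continuousWithinAt

theorem sol_conty (hs : IsSolTeps σ ε z y) : ContinuousOn y (Set.Ici 0) :=
  fun t ht => (hs t ht).2.continuousAt.continuousWithinAt

theorem norm_u_le (h : SatC σ L M) (ε t : ℝ) (x : E2) : ‖σ ⟪bvp ε t, x⟫ • bvp ε t‖ ≤ M := by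
  rw [norm_smul, norm_bvp, mul_one]
  exact h.bdd _

theorem y_diff (h : SatC σ L M) (hs : IsSolTeps σ ε z y) {s t : ℝ} (h0 : 0 ≤ s) (hst : s ≤ t) :
    ‖y t - y s‖ ≤ M * (t - s) := by
  apply norm_image_sub_le_of_norm_deriv_le_segment' (f := y)
    (f' := fun t => (-(σ ⟪bvp ε t, z t⟫) • bvp ε t)) (b := t)
  · intro x hx
    exact (hs x (h0.trans hx.1)).2.hasDerivWithinAt
  · intro x hx
    rw [neg_smul, norm_neg]
    exact norm_u_le h _ _ _
  · exact ⟨hst, le_rfl⟩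

theorem z_diff (h : SatC σ L M) (hs : IsSolTeps σ ε z y) {s t : ℝ} (h0 : 0 ≤ s) (hst : s ≤ t)
    (ht1 : t ≤ s + 1) : ‖z t - (t - s) • y t - z s‖ ≤ M * (t - s) := by
  have := norm_image_sub_le_of_norm_deriv_le_segment' (a := s) (b := t)
    (f := fun τ => z τ - (τ - s) • y τ) (C := M)
    (f' := fun t => (y t - σ ⟪bvp ε t, z t⟫ • bvp ε t) -
      ((t - s) • (-(σ ⟪bvp ε t, z t⟫) • bvp ε t) + (1:ℝ) • y t)) ?_ ?_ t ⟨hst, le_rfl⟩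
  · simpa using this
  · intro x hx
    have hx' := hs x (h0.trans hx.1)
    exact (hx'.1.sub (((hasDerivAt_id x).sub_const s).smul hx'.2)).hasDerivWithinAt
  · intro x hx
    have : (y x - σ ⟪bvp ε x, z x⟫ • bvp ε x) -
      ((x - s) • (-(σ ⟪bvp ε x, z x⟫) • bvp ε x) + (1:ℝ) • y x) =
      (x - s - 1) • (σ ⟪bvp ε x, z x⟫ • bvp ε x) := by module
    rw [this, norm_smul, Real.norm_eq_abs, abs_of_nonpos (by linarith [hx.2])]
    have h1 := norm_u_le h ε x (z x)
    nlinarith [hx.1, hx.2, norm_nonneg (σ ⟪bvp ε x, z x⟫ • bvp ε x)]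

theorem lemG (h : SatC σ L M) (hs : IsSolTeps σ ε z y) {s t : ℝ} (h0 : 0 ≤ s) (hst : s ≤ t)
    (ht1 : t ≤ s + 1) (ε' s' : ℝ) :
    -(M ^ 2 * L * (t - s) / 4) ≤
      ⟪bvp ε' s', y t⟫ * (σ ⟪bvp ε' s', z t⟫ - σ ⟪bvp ε' s', z s⟫) := by
  rcases hst.eq_or_lt with rfl | hlt
  · simp
  have h1 := z_diff h hs h0 hst ht1
  have h2 := (abs_inner_bvp_le ε' s' (z t - (t - s) • y t - z s)).trans h1
  simp only [inner_sub_right, real_inner_smul_right] at h2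
  have h3 := h.coco ⟪bvp ε' s', z t⟫ ⟪bvp ε' s', z s⟫
  generalize ⟪bvp ε' s', z t⟫ = a at *
  generalize ⟪bvp ε' s', z s⟫ = b at *
  generalize ⟪bvp ε' s', y t⟫ = q at *
  set Δ := σ a - σ b
  have hd : 0 < t - s := by linarith
  generalize t - s = d at *
  have hL := h.Lpos
  have hM := h.Mpos
  set e := a - d * q - b with he
  have h4 : -(M * d * |Δ|) ≤ - (e * Δ) := by
    have : e * Δ ≤ |e| * |Δ| := by rw [← abs_mul]; exact le_abs_self _
    nlinarith [abs_nonneg Δ]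
  have h5 : Δ * (a - b) = d * (q * Δ) + e * Δ := by rw [he]; ring
  rw [h5] at h3
  have h6 : |Δ| ^ 2 = Δ ^ 2 := sq_abs Δ
  have h7 : -(M ^ 2 * L * d / 4) * (d * L) ≤ (q * Δ) * (d * L) := by
    nlinarith [sq_nonneg (|Δ| - L * M * d / 2)]
  exact le_of_mul_le_mul_right h7 (by positivity)

/-- Dissipation along a trajectory. -/
def Dis (σ : ℝ → ℝ) (ε : ℝ) (z y : ℝ → E2) (t : ℝ) : ℝ :=
  ⟪fvec σ (z t) - fvec σ (z t - y t), y t⟫ + ⟪bvp ε t, fvec σ (z t)⟫ * σ ⟪bvp ε t, z t⟫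

/-- Oscillating error term along a trajectory. -/
def Err (σ : ℝ → ℝ) (ε : ℝ) (z y : ℝ → E2) (t : ℝ) : ℝ :=
  ⟪fvec σ (z t), y t⟫ - ⟪bvp ε t, y t⟫ * σ ⟪bvp ε t, z t⟫

theorem Dis_cont (h : SatC σ L M) (hs : IsSolTeps σ ε z y) :
    ContinuousOn (Dis σ ε z y) (Set.Ici 0) := by
  have h1 := h.cont
  have h2 := continuous_bvp ε
  have h3 := sol_contz hs
  have h4 := sol_conty hs
  have h5 := f_cont h
  have h6 : ContinuousOn (fun t => σ ⟪bvp ε t, z t⟫) (Set.Ici 0) :=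
    h1.comp_continuousOn (h2.continuousOn.inner h3)
  have h7 : ContinuousOn (fun t => fvec σ (z t)) (Set.Ici 0) := h5.comp_continuousOn h3
  have h8 : ContinuousOn (fun t => fvec σ (z t - y t)) (Set.Ici 0) :=
    h5.comp_continuousOn (h3.sub h4)
  exact ((h7.sub h8).inner h4).add ((h2.continuousOn.inner h7).mul h6)

theorem Err_cont (h : SatC σ L M) (hs : IsSolTeps σ ε z y) :
    ContinuousOn (Err σ ε z y) (Set.Ici 0) := by
  have h1 := h.cont
  have h2 := continuous_bvp ε
  have h3 := sol_contz hs
  have h4 := sol_conty hs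
  have h5 := f_cont h
  have h6 : ContinuousOn (fun t => σ ⟪bvp ε t, z t⟫) (Set.Ici 0) :=
    h1.comp_continuousOn (h2.continuousOn.inner h3)
  have h7 : ContinuousOn (fun t => fvec σ (z t)) (Set.Ici 0) := h5.comp_continuousOn h3
  exact (h7.inner h4).sub ((h2.continuousOn.inner h4).mul h6)

theorem iiOn {g : ℝ → ℝ} (hg : ContinuousOn g (Set.Ici 0)) {a b : ℝ} (ha : 0 ≤ a) (hb : 0 ≤ b) :
    IntervalIntegrable g volume a b :=
  (hg.mono fun _ hx => (le_min ha hb).trans hx.1).intervalIntegrable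

theorem dis2 (h : SatC σ L M) (ε t : ℝ) (x : E2) :
    modSat σ ‖x‖ / ‖x‖ * (σ ‖x‖ / ‖x‖) * ⟪bvp ε t, x⟫ ^ 2 ≤
      ⟪bvp ε t, fvec σ x⟫ * σ ⟪bvp ε t, x⟫ := by
  rcases eq_or_ne x 0 with rfl | hx
  · simp [h.zero]
  have hn : 0 < ‖x‖ := norm_pos_iff.2 hx
  have h1 := h.ratio hn (abs_inner_bvp_le ε t x)
  rw [fvec_eq, real_inner_smul_right, mul_assoc, mul_assoc]
  refine mul_le_mul_of_nonneg_left ?_ (div_nonneg (h.S_nonneg hn.le) hn.le)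
  linarith

theorem dis2_nonneg (h : SatC σ L M) (ε t : ℝ) (x : E2) :
    0 ≤ ⟪bvp ε t, fvec σ x⟫ * σ ⟪bvp ε t, x⟫ := by
  refine le_trans ?_ (dis2 h ε t x)
  have h1 := h.S_nonneg (norm_nonneg x)
  have h2 := h.nonneg (norm_nonneg x)
  positivity

theorem Dis_nonneg (h : SatC σ L M) (ε : ℝ) (z y : ℝ → E2) (t : ℝ) : 0 ≤ Dis σ ε z y t :=
  add_nonneg (f_mono h _ _) (dis2_nonneg h _ _ _)

theorem V0_deriv (h : SatC σ L M) (hs : IsSolTeps σ ε z y) {t : ℝ} (ht : 0 ≤ t) :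
    HasDerivAt (fun t => V0 σ (z t) (y t)) (- Dis σ ε z y t + 2 * Err σ ε z y t) t := by
  obtain ⟨h1, h2⟩ := hs t ht
  have h3 := (h2.norm_sq.add (Fpot_deriv h h1)).add (Fpot_deriv h (h1.sub h2))
  refine h3.congr_deriv ?_
  simp only [Dis, Err, Pi.sub_apply]
  simp only [inner_sub_left, inner_sub_right, real_inner_smul_right, neg_smul, inner_neg_right,
    real_inner_comm (bvp ε t)]
  ring

theorem V0_int (h : SatC σ L M) (hs : IsSolTeps σ ε z y) {a b : ℝ} (ha : 0 ≤ a) (hb : a ≤ b) :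
    V0 σ (z b) (y b) - V0 σ (z a) (y a) =
      - (∫ t in a..b, Dis σ ε z y t) + 2 * ∫ t in a..b, Err σ ε z y t := by
  have i1 := iiOn (Dis_cont h hs) ha (ha.trans hb)
  have i2 := iiOn (Err_cont h hs) ha (ha.trans hb)
  have i3 : IntervalIntegrable (fun x => - Dis σ ε z y x) volume a b := i1.neg
  rw [← intervalIntegral.integral_neg, ← intervalIntegral.integral_const_mul,
    ← intervalIntegral.integral_add i3 (i2.const_mul 2)]
  symm
  apply intervalIntegral.integral_eq_sub_of_hasDerivAt (f := fun t => V0 σ (z t) (y t))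
  · intro t ht
    rw [Set.uIcc_of_le hb] at ht
    exact V0_deriv h hs (ha.trans ht.1)
  · exact i3.add (i2.const_mul 2)

theorem period_err (h : SatC σ L M) (hs : IsSolTeps σ ε z y) {t : ℝ} (ht : 0 ≤ t) (hε : 0 < ε)
    (hε1 : ε ≤ 1) :
    ∫ s in t..(t + ε), Err σ ε z y s ≤
      ε * (⟪fvec σ (z (t + ε)), y (t + ε)⟫ - ⟪fvec σ (z t), y t⟫)
        + 2 * M ^ 2 * (1 + L / 4) * ε ^ 2 := by
  have hL := h.Lpos
  have hM := h.Mpos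
  set t1 := t + ε with ht1
  have pt : ∀ s ∈ Set.Icc t t1, Err σ ε z y s ≤
      (⟪fvec σ (z t1), y t1⟫ + 2 * M ^ 2 * (1 + L / 4) * ε) -
        ⟪bvp ε s, y t⟫ * σ ⟪bvp ε s, z t⟫ := by
    intro s ⟨hs1, hs2⟩
    have hs0 : 0 ≤ s := ht.trans hs1
    -- the part with f
    have a1 : -(M ^ 2 * L * (t1 - s) / 4) ≤ ⟪fvec σ (z t1) - fvec σ (z s), y t1⟫ :=
      f_ge h fun s' => lemG h hs hs0 hs2 (by linarith) 1 s'
    have a2 : ⟪fvec σ (z s), y s - y t1⟫ ≤ M * (M * (t1 - s)) := by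
      refine (real_inner_le_norm _ _).trans ?_
      refine mul_le_mul (f_bdd h _) ?_ (norm_nonneg _) hM.le
      rw [norm_sub_rev]
      exact y_diff h hs hs0 hs2
    rw [inner_sub_left] at a1
    rw [inner_sub_right] at a2
    -- the part with u
    have b1 := lemG h hs ht hs1 (by linarith) ε s
    have b2 : -(M * (s - t) * M) ≤ ⟪bvp ε s, y s - y t⟫ * σ ⟪bvp ε s, z t⟫ := by
      refine le_trans (neg_le_neg ?_) (neg_abs_le _)
      rw [abs_mul]
      exact mul_le_mul ((abs_inner_bvp_le _ _ _).trans (y_diff h hs ht hs1)) (h.bdd _)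
        (abs_nonneg _) (by nlinarith)
    rw [inner_sub_right] at b2
    have c1 : t1 - s ≤ ε := by linarith
    have c2 : s - t ≤ ε := by linarith
    have d1 : M ^ 2 * L * (t1 - s) ≤ M ^ 2 * L * ε := mul_le_mul_of_nonneg_left c1 (by positivity)
    have d2 : M ^ 2 * L * (s - t) ≤ M ^ 2 * L * ε := mul_le_mul_of_nonneg_left c2 (by positivity)
    have d3 : M ^ 2 * (t1 - s) ≤ M ^ 2 * ε := mul_le_mul_of_nonneg_left c1 (by positivity)
    have d4 : M ^ 2 * (s - t) ≤ M ^ 2 * ε := mul_le_mul_of_nonneg_left c2 (by positivity)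
    unfold Err
    nlinarith
  have hle : t ≤ t1 := by linarith
  have i1 := (cont_bs h ε (z t) (y t)).intervalIntegrable (μ := volume) t t1
  refine (intervalIntegral.integral_mono_on hle (iiOn (Err_cont h hs) ht (ht.trans hle))
    ((continuous_const.intervalIntegrable _ _).sub i1) pt).trans ?_
  rw [intervalIntegral.integral_sub (continuous_const.intervalIntegrable _ _) i1,
    ht1, avg_f h hε, intervalIntegral.integral_const, smul_eq_mul]
  apply le_of_eq
  ring

/-- Corrected Lyapunov function along a trajectory. -/
def Wf (σ : ℝ → ℝ) (ε : ℝ) (z y : ℝ → E2) (t : ℝ) : ℝ :=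
  V0 σ (z t) (y t) - 2 * ε * ⟪fvec σ (z t), y t⟫

theorem W_step (h : SatC σ L M) (hs : IsSolTeps σ ε z y) {t : ℝ} (ht : 0 ≤ t) (hε : 0 < ε)
    (hε1 : ε ≤ 1) :
    Wf σ ε z y (t + ε) ≤ Wf σ ε z y t - (∫ s in t..(t + ε), Dis σ ε z y s)
      + 4 * M ^ 2 * (1 + L / 4) * ε ^ 2 := by
  have h1 := V0_int h hs ht (show t ≤ t + ε by linarith)
  have h2 := period_err h hs ht hε hε1
  unfold Wf
  linarith

theorem W_steps (h : SatC σ L M) (hs : IsSolTeps σ ε z y) {t : ℝ} (ht : 0 ≤ t) (hε : 0 < ε)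
    (hε1 : ε ≤ 1) (n : ℕ) :
    Wf σ ε z y (t + n * ε) ≤ Wf σ ε z y t - (∫ s in t..(t + n * ε), Dis σ ε z y s)
      + n * (4 * M ^ 2 * (1 + L / 4) * ε ^ 2) := by
  induction n with
  | zero => simp
  | succ n ih =>
    have hn : 0 ≤ t + n * ε := by positivity
    have h1 := W_step h hs hn hε hε1
    have e : t + n * ε + ε = t + (n + 1 : ℕ) * ε := by push_cast; ring
    rw [e] at h1
    have h2 := intervalIntegral.integral_add_adjacent_intervals
      (iiOn (Dis_cont h hs) ht hn)
      (iiOn (Dis_cont h hs) hn (show 0 ≤ t + (n + 1 : ℕ) * ε by positivity))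
    rw [← h2]
    push_cast at *
    linarith

theorem W_bdd (h : SatC σ L M) (hε : 0 < ε) (t : ℝ) : -(ε * M) ^ 2 ≤ Wf σ ε z y t := by
  have h1 := Fpot_nonneg h (z t)
  have h2 := Fpot_nonneg h (z t - y t)
  have h3 : V0 σ (z t) (y t) = ‖y t‖ ^ 2 + Fpot σ (z t) + Fpot σ (z t - y t) := rfl
  have h4 : ⟪fvec σ (z t), y t⟫ ≤ M * ‖y t‖ :=
    (real_inner_le_norm _ _).trans (mul_le_mul_of_nonneg_right (f_bdd h _) (norm_nonneg _))
  unfold Wf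
  have h5 := mul_le_mul_of_nonneg_left h4 hε.le
  nlinarith [sq_nonneg (‖y t‖ - ε * M)]

theorem z_move (h : SatC σ L M) (hs : IsSolTeps σ ε z y) {s t : ℝ} (h0 : 0 ≤ t) (hst : t ≤ s)
    (ht1 : s ≤ t + 1) : ‖z s - z t‖ ≤ (s - t) * (‖y t‖ + 2 * M) := by
  have h1 := z_diff h hs h0 hst ht1
  have h2 := y_diff h hs h0 hst
  have h3 : ‖y s‖ ≤ ‖y t‖ + M * (s - t) := by
    have := norm_add_le (y t) (y s - y t)
    rw [add_sub_cancel] at this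
    linarith
  have h4 : z s - z t = (z s - (s - t) • y s - z t) + (s - t) • y s := by abel
  have h5 := norm_add_le (z s - (s - t) • y s - z t) ((s - t) • y s)
  rw [← h4, norm_smul, Real.norm_eq_abs, abs_of_nonneg (by linarith)] at h5
  have hM := h.Mpos
  have h6 : ‖y s‖ ≤ ‖y t‖ + M := by nlinarith
  have h7 := mul_le_mul_of_nonneg_left h6 (show 0 ≤ s - t by linarith)
  nlinarith

theorem good_case (h : SatC σ L M) (hs : IsSolTeps σ ε z y) {t : ℝ} (ht : 0 ≤ t) (hε : 0 < ε)
    (hε1 : ε ≤ 1) (hg : 1 + 8 * ε * (‖y t‖ + 2 * M) ≤ ‖z t‖) :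
    modSat σ (7/8) * σ (7/8) * (15/81) * ε ≤ ∫ s in t..(t + ε), Dis σ ε z y s := by
  have hM := h.Mpos
  set r0 := ‖z t‖ with hr0
  set c0 := modSat σ (7/8) * σ (7/8) with hc0
  have hS : 0 < modSat σ (7/8) := h.S_pos (by norm_num)
  have hσ : 0 < σ (7/8) := h.pos _ (by norm_num)
  have hc0p : 0 < c0 := mul_pos hS hσ
  have hr1 : 1 ≤ r0 := by
    have : 0 ≤ 8 * ε * (‖y t‖ + 2 * M) := by positivity
    linarith
  have hr0p : 0 < r0 := by linarith
  have pt : ∀ s ∈ Set.Icc t (t + ε), c0 * (64 / (81 * r0 ^ 2)) *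
      (1/2 * ⟪bvp ε s, z t⟫ ^ 2 - r0 ^ 2 / 64) ≤ Dis σ ε z y s := by
    intro s ⟨hs1, hs2⟩
    have h1 : ‖z s - z t‖ ≤ r0 / 8 := by
      have := z_move h hs ht hs1 (by linarith)
      have h2 : (s - t) * (‖y t‖ + 2 * M) ≤ ε * (‖y t‖ + 2 * M) :=
        mul_le_mul_of_nonneg_right (by linarith) (by positivity)
      linarith
    have hlo : 7/8 * r0 ≤ ‖z s‖ := by
      have := norm_sub_norm_le (z t) (z s)
      rw [norm_sub_rev] at this
      linarith
    have hhi : ‖z s‖ ≤ 9/8 * r0 := by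
      have := norm_sub_norm_le (z s) (z t)
      linarith
    have hX : |⟪bvp ε s, z s⟫ - ⟪bvp ε s, z t⟫| ≤ r0 / 8 := by
      rw [← inner_sub_right]
      exact (abs_inner_bvp_le _ _ _).trans h1
    have hd := dis2 h ε s (z s)
    have hD : ⟪bvp ε s, fvec σ (z s)⟫ * σ ⟪bvp ε s, z s⟫ ≤ Dis σ ε z y s := by
      have := f_mono h (z s) (y s)
      unfold Dis; linarith
    refine le_trans ?_ (hd.trans hD)
    set r := ‖z s‖
    have hrp : 0 < r := by linarith
    have e1 : c0 ≤ modSat σ r * σ r :=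
      mul_le_mul (h.S_mono (by norm_num) (by linarith)) (h.mono (by linarith)) hσ.le
        (h.S_nonneg hrp.le)
    have e2 : c0 * (64 / (81 * r0 ^ 2)) ≤ modSat σ r / r * (σ r / r) := by
      rw [div_mul_div_comm, mul_div_assoc', div_le_div_iff₀ (by positivity) (by positivity)]
      have : r * r ≤ (9/8 * r0) * (9/8 * r0) := mul_le_mul hhi hhi hrp.le (by linarith)
      nlinarith [mul_le_mul e1 this (by positivity) (by linarith)]
    have e3 : 1/2 * ⟪bvp ε s, z t⟫ ^ 2 - r0 ^ 2 / 64 ≤ ⟪bvp ε s, z s⟫ ^ 2 := by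
      have := sq_le_sq' (by linarith [(abs_le.1 hX).1]) (abs_le.1 hX).2
      nlinarith [sq_nonneg (2 * ⟪bvp ε s, z s⟫ - ⟪bvp ε s, z t⟫)]
    calc _ ≤ c0 * (64 / (81 * r0 ^ 2)) * ⟪bvp ε s, z s⟫ ^ 2 :=
          mul_le_mul_of_nonneg_left e3 (by positivity)
      _ ≤ _ := mul_le_mul_of_nonneg_right e2 (sq_nonneg _)
  have hle : t ≤ t + ε := by linarith
  have hb := continuous_bvp ε
  have := intervalIntegral.integral_mono_on hle
    (Continuous.intervalIntegrable (by fun_prop) _ _)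
    (iiOn (Dis_cont h hs) ht (ht.trans hle)) pt
  refine le_trans (le_of_eq ?_) this
  rw [intervalIntegral.integral_const_mul, intervalIntegral.integral_sub
    (Continuous.intervalIntegrable (by fun_prop) _ _)
    (Continuous.intervalIntegrable (by fun_prop) _ _), intervalIntegral.integral_const_mul,
    avg_sq hε, intervalIntegral.integral_const, ← hr0, smul_eq_mul]
  field_simp
  ring

theorem bad_pt (h : SatC σ L M) (hs : IsSolTeps σ ε z y) {t : ℝ} (ht : 0 ≤ t) (hε : 0 < ε)
    (hε1 : ε ≤ 1/100) (hb : ‖z t‖ < 1 + 8 * ε * (‖y t‖ + 2 * M))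
    (hR : 60 + 40 * M ≤ ‖y t‖) {s : ℝ} (hs1 : t + 1/4 ≤ s) (hs2 : s ≤ t + 1/2) :
    σ 1 / 4 ≤ Dis σ ε z y s := by
  have hM := h.Mpos
  have hσ1 := h.pos 1 one_pos
  have hts : t ≤ s := by linarith
  have h1 := z_diff h hs ht hts (by linarith)
  have h2 := y_diff h hs ht hts
  set Y := ‖y s‖ with hY
  have hY0 : ‖y t‖ ≤ Y + M / 2 := by
    have := norm_sub_norm_le (y t) (y s)
    rw [norm_sub_rev] at this
    nlinarith
  have hYp : 0 < Y := by linarith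
  have hz : ‖z t‖ ≤ 1 + 8/100 * (‖y t‖ + 2 * M) := by
    have : 8 * ε * (‖y t‖ + 2 * M) ≤ 8/100 * (‖y t‖ + 2 * M) :=
      mul_le_mul_of_nonneg_right (by linarith) (by positivity)
    linarith
  have he : ‖z s - (s - t) • y s‖ ≤ Y / 10 := by
    have h3 := norm_add_le (z s - (s - t) • y s - z t) (z t)
    rw [sub_add_cancel] at h3
    nlinarith
  have pt : ∀ s' ∈ Set.Icc (0:ℝ) 1, σ 1 / Y ^ 2 * ⟪bvp 1 s', y s⟫ ^ 2 - σ 1 / 4 ≤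
      ⟪bvp 1 s', y s⟫ * (σ ⟪bvp 1 s', z s⟫ - σ ⟪bvp 1 s', z s - y s⟫) := by
    intro s' _
    have h3 := (abs_inner_bvp_le 1 s' (z s - (s - t) • y s)).trans he
    have h4 := abs_inner_bvp_le 1 s' (y s)
    rw [← hY] at h4
    rw [inner_sub_right, real_inner_smul_right] at h3
    rw [inner_sub_right]
    generalize ⟪bvp 1 s', y s⟫ = q at *
    generalize ⟪bvp 1 s', z s⟫ = a at *
    have hd1 : 1/4 ≤ s - t := by linarith
    have hd2 : s - t ≤ 1/2 := by linarith
    generalize s - t = d at *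
    obtain ⟨h3a, h3b⟩ := abs_le.1 h3
    obtain ⟨h4a, h4b⟩ := abs_le.1 h4
    have hq2 : σ 1 / Y ^ 2 * q ^ 2 ≤ σ 1 := by
      rw [div_mul_eq_mul_div, div_le_iff₀ (by positivity)]
      exact mul_le_mul_of_nonneg_left (sq_le_sq' h4a h4b) hσ1.le
    rcases le_or_gt (Y/2) q with c1 | c1
    · have ha : 0 ≤ a := by nlinarith
      have haq : 1 ≤ -(a - q) := by nlinarith
      have e1 := h.nonneg ha
      have e2 := h.mono haq
      rw [h.odd] at e2
      nlinarith
    · rcases le_or_gt q (-(Y/2)) with c2 | c2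
      · have ha : 0 ≤ -a := by nlinarith
        have haq : 1 ≤ (a - q) := by nlinarith
        have e1 := h.nonneg ha
        rw [h.odd] at e1
        have e2 := h.mono haq
        nlinarith
      · refine le_trans ?_ (h.mono_mul a q)
        have : q ^ 2 ≤ (Y/2) ^ 2 := sq_le_sq' c2.le c1.le
        have : σ 1 / Y ^ 2 * q ^ 2 ≤ σ 1 / Y ^ 2 * (Y/2) ^ 2 :=
          mul_le_mul_of_nonneg_left this (by positivity)
        have e : σ 1 / Y ^ 2 * (Y/2) ^ 2 = σ 1 / 4 := by field_simp; norm_num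
        linarith
  have hbc := continuous_bvp 1
  have hσc := h.cont
  have := intervalIntegral.integral_mono_on (μ := volume) zero_le_one
    (Continuous.intervalIntegrable (by fun_prop) _ _)
    (Continuous.intervalIntegrable (by fun_prop) _ _) pt
  rw [← f_avg_sub h, intervalIntegral.integral_sub
    (Continuous.intervalIntegrable (by fun_prop) _ _)
    (Continuous.intervalIntegrable (by fun_prop) _ _), intervalIntegral.integral_const_mul] at this
  have e := avg_sq one_pos 0 (y s)
  rw [zero_add] at e
  rw [e, intervalIntegral.integral_const, ← hY] at this
  have e2 : σ 1 / Y ^ 2 * (1 / 2 * Y ^ 2) = σ 1 / 2 := by field_simp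
  rw [e2] at this
  simp only [sub_zero, smul_eq_mul, one_mul] at this
  have := dis2_nonneg h ε s (z s)
  unfold Dis
  linarith

theorem bad_case (h : SatC σ L M) (hs : IsSolTeps σ ε z y) {t : ℝ} (ht : 0 ≤ t) (hε : 0 < ε)
    (hε1 : ε ≤ 1/100) (hb : ‖z t‖ < 1 + 8 * ε * (‖y t‖ + 2 * M))
    (hR : 60 + 40 * M ≤ ‖y t‖) {T : ℝ} (hT : 1/2 ≤ T) :
    σ 1 / 16 ≤ ∫ s in t..(t + T), Dis σ ε z y s := by
  have hc := Dis_cont h hs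
  rw [← intervalIntegral.integral_add_adjacent_intervals (b := t + 1/4)
    (iiOn hc ht (by linarith)) (iiOn hc (by linarith) (by linarith)),
    ← intervalIntegral.integral_add_adjacent_intervals (a := t + 1/4) (b := t + 1/2)
    (iiOn hc (by linarith) (by linarith)) (iiOn hc (by linarith) (by linarith))]
  have h1 : 0 ≤ ∫ s in t..(t + 1/4), Dis σ ε z y s :=
    intervalIntegral.integral_nonneg (by linarith) fun s _ => Dis_nonneg h ε z y s
  have h2 : 0 ≤ ∫ s in (t + 1/2)..(t + T), Dis σ ε z y s :=
    intervalIntegral.integral_nonneg (by linarith) fun s _ => Dis_nonneg h ε z y s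
  have h3 := intervalIntegral.integral_mono_on (a := t + 1/4) (b := t + 1/2) (by linarith)
    ((continuous_const (y := σ 1 / 4)).intervalIntegrable (μ := volume) _ _)
    (iiOn hc (by linarith) (by linarith))
    (fun s hs' => bad_pt h hs ht hε hε1 hb hR hs'.1 hs'.2)
  rw [intervalIntegral.integral_const, smul_eq_mul] at h3
  linarith

theorem lemA (h : SatC σ L M) : ∃ R > 0, ∃ ε₁ > 0, ∀ ε : ℝ, 0 < ε → ε < ε₁ → ∀ z y : ℝ → E2,
    IsSolTeps σ ε z y → ∃ T, 0 ≤ T ∧ ‖z T‖ ≤ R ∧ ‖y T‖ ≤ R := by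
  have hM := h.Mpos
  have hL := h.Lpos
  set K := 4 * M ^ 2 * (1 + L / 4) with hK
  have hKp : 0 < K := by positivity
  set c0 := modSat σ (7/8) * σ (7/8) * (15/81) with hc0
  have hc0p : 0 < c0 := by
    have hS : 0 < modSat σ (7/8) := h.S_pos (by norm_num)
    have hσ : 0 < σ (7/8) := h.pos _ (by norm_num)
    positivity
  set c1 := σ 1 / 16 with hc1
  have hc1p : 0 < c1 := by have := h.pos 1 one_pos; positivity
  refine ⟨60 + 40 * M, by positivity, min (1/100) (min (c0 / (2 * K)) (c1 / (2 * K))),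
    by positivity, ?_⟩
  intro ε hε hlt z y hs
  have hε1 : ε < 1/100 := hlt.trans_le (min_le_left _ _)
  have hε2 : ε < c0 / (2 * K) := hlt.trans_le ((min_le_right _ _).trans (min_le_left _ _))
  have hε3 : ε < c1 / (2 * K) := hlt.trans_le ((min_le_right _ _).trans (min_le_right _ _))
  rw [lt_div_iff₀ (by positivity)] at hε2 hε3
  by_contra hcon
  push Not at hcon
  set δ := min (c0 * ε / 2) (c1 / 2)
  have hδ : 0 < δ := by positivity
  have hδ1 : δ ≤ c0 * ε / 2 := min_le_left _ _
  have hδ2 : δ ≤ c1 / 2 := min_le_right _ _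
  have step : ∀ t, 0 ≤ t → ∃ t', 0 ≤ t' ∧ Wf σ ε z y t' ≤ Wf σ ε z y t - δ := by
    intro t ht
    rcases le_or_gt (1 + 8 * ε * (‖y t‖ + 2 * M)) ‖z t‖ with hg | hb
    · refine ⟨t + ε, by positivity, ?_⟩
      have h1 := W_step h hs ht hε (by linarith)
      have h2 := good_case h hs ht hε (by linarith) hg
      rw [← hc0] at h2
      rw [← hK] at h1
      nlinarith
    · have hy : 60 + 40 * M ≤ ‖y t‖ := by
        by_contra hlt'
        push Not at hlt'
        have h1 : ¬ ‖z t‖ ≤ 60 + 40 * M := fun hz => by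
          have := hcon t ht hz
          linarith
        have h2 : 8 * ε * (‖y t‖ + 2 * M) ≤ 8/100 * (‖y t‖ + 2 * M) :=
          mul_le_mul_of_nonneg_right (by linarith) (by positivity)
        linarith
      set n := ⌈1 / (2 * ε)⌉₊
      have n1 : 1/2 ≤ n * ε := by
        have := Nat.le_ceil (1 / (2 * ε))
        rw [div_le_iff₀ (by positivity)] at this
        linarith
      have n2 : n * ε ≤ 1 := by
        have := Nat.ceil_lt_add_one (show 0 ≤ 1 / (2 * ε) by positivity)
        have h3 := mul_le_mul_of_nonneg_right this.le hε.le
        have e : (1 / (2 * ε) + 1) * ε = 1/2 + ε := by field_simp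
        rw [e] at h3
        linarith
      refine ⟨t + n * ε, by positivity, ?_⟩
      have h1 := W_steps h hs ht hε (by linarith) n
      have h2 := bad_case h hs ht hε hε1.le hb hy n1
      rw [← hc1] at h2
      rw [← hK] at h1
      have h3 : (n:ℝ) * (K * ε ^ 2) ≤ K * ε := by
        have : (n * ε) * (K * ε) ≤ 1 * (K * ε) := mul_le_mul_of_nonneg_right n2 (by positivity)
        linarith
      linarith
  have all : ∀ n : ℕ, ∃ t, 0 ≤ t ∧ Wf σ ε z y t ≤ Wf σ ε z y 0 - n * δ := by
    intro n
    induction n with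
    | zero => exact ⟨0, le_rfl, by simp⟩
    | succ n ih =>
      obtain ⟨t, ht, hW⟩ := ih
      obtain ⟨t', ht', hW'⟩ := step t ht
      refine ⟨t', ht', ?_⟩
      push_cast
      linarith
  obtain ⟨n, hn⟩ := exists_nat_gt ((Wf σ ε z y 0 + (ε * M) ^ 2) / δ)
  rw [div_lt_iff₀ hδ] at hn
  obtain ⟨t, ht, hW⟩ := all n
  have := W_bdd (z := z) (y := y) h hε t
  linarith

theorem Dis_lower (h : SatC σ L M) {R : ℝ} (hR : 0 < R) : ∃ c > 0, ∀ (ε : ℝ) (z y : ℝ → E2) (t : ℝ),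
    ‖z t‖ ≤ R → ‖z t - y t‖ ≤ R → c * (‖y t‖ ^ 2 + ⟪bvp ε t, z t⟫ ^ 2) ≤ Dis σ ε z y t := by
  obtain ⟨c1, hc1, H1⟩ := f_smono h R
  obtain ⟨c2, hc2, H2⟩ := h.S_inc R
  have hσR : 0 < σ R := h.pos R hR
  refine ⟨min c1 (c2 * (σ R / R)), by positivity, ?_⟩
  intro ε z y t hz hw
  have e1 := H1 (z t) (z t - y t) hz hw
  rw [sub_sub_cancel] at e1
  have e2 : c2 * (σ R / R) * ⟪bvp ε t, z t⟫ ^ 2 ≤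
      ⟪bvp ε t, fvec σ (z t)⟫ * σ ⟪bvp ε t, z t⟫ := by
    rcases eq_or_ne (z t) 0 with h0 | h0
    · simp [h0, h.zero]
    have hn : 0 < ‖z t‖ := norm_pos_iff.2 h0
    refine le_trans (mul_le_mul_of_nonneg_right ?_ (sq_nonneg _)) (dis2 h ε t (z t))
    apply mul_le_mul
    · rw [le_div_iff₀ hn]
      have := H2 0 ‖z t‖ le_rfl hn.le hz
      simpa [h.S_zero] using this
    · rw [le_div_iff₀ hn]
      have := h.ratio hR (x := ‖z t‖) (by rwa [abs_of_pos hn])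
      nlinarith
    · positivity
    · exact div_nonneg (h.S_nonneg hn.le) hn.le
  have m1 := min_le_left c1 (c2 * (σ R / R))
  have m2 := min_le_right c1 (c2 * (σ R / R))
  have e3 := mul_le_mul_of_nonneg_right m1 (sq_nonneg ‖y t‖)
  have e4 := mul_le_mul_of_nonneg_right m2 (sq_nonneg ⟪bvp ε t, z t⟫)
  unfold Dis
  rw [mul_add]
  linarith

theorem abs_σ_le (h : SatC σ L M) (x : ℝ) : |σ x| ≤ L * |x| := by
  have := h.lip x 0
  rwa [h.zero, sub_zero, sub_zero] at this

theorem sol_gronwall (h : SatC σ L M) (hs : IsSolTeps σ ε z y) {t s : ℝ} (ht : 0 ≤ t)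
    (hts : t ≤ s) : ‖(z s, y s)‖ ≤ ‖(z t, y t)‖ * exp ((1 + L) * (s - t)) := by
  have hL := h.Lpos
  have := norm_le_gronwallBound_of_norm_deriv_right_le (f := fun s => (z s, y s))
    (f' := fun t => (y t - σ ⟪bvp ε t, z t⟫ • bvp ε t, -(σ ⟪bvp ε t, z t⟫) • bvp ε t))
    (δ := ‖(z t, y t)‖) (K := 1 + L) (ε := 0) (a := t) (b := s) ?_ ?_ le_rfl ?_ s ⟨hts, le_rfl⟩
  · rwa [gronwallBound_ε0] at this
  · intro x hx
    have := hs x (ht.trans hx.1)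
    exact (this.1.prodMk this.2).continuousAt.continuousWithinAt
  · intro x hx
    have := hs x (ht.trans hx.1)
    exact (this.1.prodMk this.2).hasDerivWithinAt
  · intro x hx
    have h1 : ‖z x‖ ≤ ‖(z x, y x)‖ := le_max_left _ _
    have h2 : ‖y x‖ ≤ ‖(z x, y x)‖ := le_max_right _ _
    have h3 : ‖σ ⟪bvp ε x, z x⟫ • bvp ε x‖ ≤ L * ‖z x‖ := by
      rw [norm_smul, norm_bvp, mul_one, Real.norm_eq_abs]
      exact (abs_σ_le h _).trans (mul_le_mul_of_nonneg_left (abs_inner_bvp_le _ _ _) hL.le)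
    have h4 : L * ‖z x‖ ≤ L * ‖(z x, y x)‖ := mul_le_mul_of_nonneg_left h1 hL.le
    rw [add_zero, Prod.norm_def]
    apply max_le
    · refine (norm_sub_le _ _).trans ?_
      linarith
    · simp only [neg_smul, norm_neg]
      linarith [norm_nonneg (z x, y x)]

theorem sol_unique (h : SatC σ L M) (hs : IsSolTeps σ ε z y) {z' y' : ℝ → E2}
    (hs' : IsSolTeps σ ε z' y') (hz : z' 0 = z 0) (hy : y' 0 = y 0) {s : ℝ} (h0 : 0 ≤ s) :
    z' s = z s ∧ y' s = y s := by
  have hL := h.Lpos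
  have := norm_le_gronwallBound_of_norm_deriv_right_le (f := fun s => (z' s - z s, y' s - y s))
    (f' := fun t => ((y' t - σ ⟪bvp ε t, z' t⟫ • bvp ε t) - (y t - σ ⟪bvp ε t, z t⟫ • bvp ε t),
      (-(σ ⟪bvp ε t, z' t⟫) • bvp ε t) - (-(σ ⟪bvp ε t, z t⟫) • bvp ε t)))
    (δ := 0) (K := 1 + L) (ε := 0) (a := 0) (b := s) ?_ ?_ ?_ ?_ s ⟨h0, le_rfl⟩
  · rw [gronwallBound_ε0, zero_mul, norm_le_zero_iff, Prod.mk_eq_zero, sub_eq_zero,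
      sub_eq_zero] at this
    exact this
  · intro x hx
    have a := hs x hx.1
    have b := hs' x hx.1
    exact ((b.1.sub a.1).prodMk (b.2.sub a.2)).continuousAt.continuousWithinAt
  · intro x hx
    have a := hs x hx.1
    have b := hs' x hx.1
    exact ((b.1.sub a.1).prodMk (b.2.sub a.2)).hasDerivWithinAt
  · simp [hz, hy]
  · intro x hx
    set p : E2 × E2 := (z' x - z x, y' x - y x)
    have h1 : ‖z' x - z x‖ ≤ ‖p‖ := le_max_left _ _
    have h2 : ‖y' x - y x‖ ≤ ‖p‖ := le_max_right _ _
    have h3 : ‖(σ ⟪bvp ε x, z' x⟫ - σ ⟪bvp ε x, z x⟫) • bvp ε x‖ ≤ L * ‖z' x - z x‖ := by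
      rw [norm_smul, norm_bvp, mul_one, Real.norm_eq_abs]
      refine (h.lip _ _).trans (mul_le_mul_of_nonneg_left ?_ hL.le)
      rw [← inner_sub_right]
      exact abs_inner_bvp_le _ _ _
    have h4 : L * ‖z' x - z x‖ ≤ L * ‖p‖ := mul_le_mul_of_nonneg_left h1 hL.le
    have e1 : (y' x - σ ⟪bvp ε x, z' x⟫ • bvp ε x) - (y x - σ ⟪bvp ε x, z x⟫ • bvp ε x) =
      (y' x - y x) - (σ ⟪bvp ε x, z' x⟫ - σ ⟪bvp ε x, z x⟫) • bvp ε x := by module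
    have e2 : (-(σ ⟪bvp ε x, z' x⟫) • bvp ε x) - (-(σ ⟪bvp ε x, z x⟫) • bvp ε x) =
      - ((σ ⟪bvp ε x, z' x⟫ - σ ⟪bvp ε x, z x⟫) • bvp ε x) := by module
    rw [add_zero, e1, e2, Prod.norm_def]
    apply max_le
    · refine (norm_sub_le _ _).trans ?_
      linarith
    · simp only [norm_neg]
      linarith [norm_nonneg p]

theorem local_period (h : SatC σ L M) (hs : IsSolTeps σ ε z y) {t : ℝ} (ht : 0 ≤ t) (hε : 0 < ε)
    {c : ℝ} (hc : 0 < c) (hκ : 4 * (3 * (1 + L)) * ε ≤ 1)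
    (hεc : 256 * L * (3 * (1 + L)) * ε ≤ c)
    (hD : ∀ s ∈ Set.Icc t (t + ε), c * (‖y s‖ ^ 2 + ⟪bvp ε s, z s⟫ ^ 2) ≤ Dis σ ε z y s) :
    V0 σ (z (t + ε)) (y (t + ε)) - V0 σ (z t) (y t) ≤
      -(c / 2) * ∫ s in t..(t + ε), (‖y s‖ ^ 2 + ⟪bvp ε s, z s⟫ ^ 2) := by
  have hL := h.Lpos
  set κ := 3 * (1 + L) with hκd
  have hκp : 0 < κ := by positivity
  set n := ‖(z t, y t)‖ with hn
  have hn0 : 0 ≤ n := norm_nonneg _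
  have hnz : ‖z t‖ ≤ n := le_max_left _ _
  have hny : ‖y t‖ ≤ n := le_max_right _ _
  have hle : t ≤ t + ε := by linarith
  have g : ∀ s ∈ Set.Icc t (t + ε), ‖z s‖ ≤ 3 * n ∧ ‖y s‖ ≤ 3 * n := by
    intro s ⟨hs1, hs2⟩
    have h1 := sol_gronwall h hs ht hs1
    have h2 : exp ((1 + L) * (s - t)) ≤ 3 := by
      have : (1 + L) * (s - t) ≤ 1 := by
        have : (1 + L) * (s - t) ≤ (1 + L) * ε :=
          mul_le_mul_of_nonneg_left (by linarith) (by positivity)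
        nlinarith
      exact (exp_le_exp.2 this).trans exp_one_lt_three.le
    have h3 : ‖(z s, y s)‖ ≤ 3 * n := by
      rw [← hn] at h1
      nlinarith
    exact ⟨(le_max_left _ _).trans h3, (le_max_right _ _).trans h3⟩
  have hu : ∀ s ∈ Set.Icc t (t + ε), ‖σ ⟪bvp ε s, z s⟫ • bvp ε s‖ ≤ L * (3 * n) := by
    intro s hs1
    rw [norm_smul, norm_bvp, mul_one, Real.norm_eq_abs]
    exact (abs_σ_le h _).trans (mul_le_mul_of_nonneg_left
      ((abs_inner_bvp_le _ _ _).trans (g s hs1).1) hL.le)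
  have dz : ∀ s ∈ Set.Icc t (t + ε), ‖z s - z t‖ ≤ κ * n * ε := by
    intro s hs1
    have := norm_image_sub_le_of_norm_deriv_le_segment' (a := t) (b := t + ε) (f := z)
      (C := κ * n) (fun x hx => (hs x (ht.trans hx.1)).1.hasDerivWithinAt) (fun x hx => by
        have hx' : x ∈ Set.Icc t (t + ε) := ⟨hx.1, hx.2.le⟩
        refine (norm_sub_le _ _).trans ?_
        linarith [hu x hx', (g x hx').2]) s hs1
    refine this.trans (mul_le_mul_of_nonneg_left (by linarith [hs1.2]) (by positivity))
  have dy : ∀ s ∈ Set.Icc t (t + ε), ‖y s - y t‖ ≤ κ * n * ε := by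
    intro s hs1
    have := norm_image_sub_le_of_norm_deriv_le_segment' (a := t) (b := t + ε) (f := y)
      (C := κ * n) (fun x hx => (hs x (ht.trans hx.1)).2.hasDerivWithinAt) (fun x hx => by
        have hx' : x ∈ Set.Icc t (t + ε) := ⟨hx.1, hx.2.le⟩
        rw [neg_smul, norm_neg]
        linarith [hu x hx']) s hs1
    refine this.trans (mul_le_mul_of_nonneg_left (by linarith [hs1.2]) (by positivity))
  -- error bound
  have hE : ∫ s in t..(t + ε), Err σ ε z y s ≤ 8 * L * κ * n ^ 2 * ε ^ 2 := by
    have pt : ∀ s ∈ Set.Icc t (t + ε), Err σ ε z y s ≤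
        (⟪fvec σ (z t), y t⟫ + 8 * L * κ * n ^ 2 * ε) -
          ⟪bvp ε s, y t⟫ * σ ⟪bvp ε s, z t⟫ := by
      intro s hs1
      obtain ⟨gz, gy⟩ := g s hs1
      have d1 := dz s hs1
      have d2 := dy s hs1
      have a1 : ⟪fvec σ (z s) - fvec σ (z t), y s⟫ ≤ L * (κ * n * ε) * (3 * n) := by
        refine (real_inner_le_norm _ _).trans (mul_le_mul ?_ gy (norm_nonneg _) (by positivity))
        exact (f_lip h _ _).trans (mul_le_mul_of_nonneg_left d1 hL.le)
      have a2 : ⟪fvec σ (z t), y s - y t⟫ ≤ L * n * (κ * n * ε) := by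
        refine (real_inner_le_norm _ _).trans (mul_le_mul ?_ d2 (norm_nonneg _) (by positivity))
        have := f_lip h (z t) 0
        rw [f_zero, sub_zero, sub_zero] at this
        exact this.trans (mul_le_mul_of_nonneg_left hnz hL.le)
      have a3 : |⟪bvp ε s, y s⟫ * (σ ⟪bvp ε s, z s⟫ - σ ⟪bvp ε s, z t⟫)| ≤
          (3 * n) * (L * (κ * n * ε)) := by
        rw [abs_mul]
        refine mul_le_mul ((abs_inner_bvp_le _ _ _).trans gy) ?_ (abs_nonneg _) (by positivity)
        refine (h.lip _ _).trans (mul_le_mul_of_nonneg_left ?_ hL.le)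
        rw [← inner_sub_right]
        exact (abs_inner_bvp_le _ _ _).trans d1
      have a4 : |⟪bvp ε s, y s - y t⟫ * σ ⟪bvp ε s, z t⟫| ≤ (κ * n * ε) * (L * n) := by
        rw [abs_mul]
        refine mul_le_mul ((abs_inner_bvp_le _ _ _).trans d2) ?_ (abs_nonneg _) (by positivity)
        exact (abs_σ_le h _).trans (mul_le_mul_of_nonneg_left
          ((abs_inner_bvp_le _ _ _).trans hnz) hL.le)
      have a3' := (abs_le.1 a3).1
      have a4' := (abs_le.1 a4).1
      rw [inner_sub_left] at a1
      rw [inner_sub_right] at a2 a4'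
      unfold Err
      linarith
    have i1 := (cont_bs h ε (z t) (y t)).intervalIntegrable (μ := volume) t (t + ε)
    refine (intervalIntegral.integral_mono_on hle (iiOn (Err_cont h hs) ht (ht.trans hle))
      ((continuous_const.intervalIntegrable _ _).sub i1) pt).trans ?_
    rw [intervalIntegral.integral_sub (continuous_const.intervalIntegrable _ _) i1,
      avg_f h hε, intervalIntegral.integral_const, smul_eq_mul]
    apply le_of_eq
    ring
  -- lower bound on the integral
  have hb := continuous_bvp ε
  have hIc : ContinuousOn (fun s => ‖y s‖ ^ 2 + ⟪bvp ε s, z s⟫ ^ 2) (Set.Ici 0) :=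
    ((sol_conty hs).norm.pow 2).add ((hb.continuousOn.inner (sol_contz hs)).pow 2)
  have iI := iiOn hIc ht (ht.trans hle)
  set I := ∫ s in t..(t + ε), (‖y s‖ ^ 2 + ⟪bvp ε s, z s⟫ ^ 2) with hI
  have hIlow : ε * n ^ 2 / 8 ≤ I := by
    have pt : ∀ s ∈ Set.Icc t (t + ε), (1/2 * ‖y t‖ ^ 2 - 2 * (κ * n * ε) ^ 2) +
        1/2 * ⟪bvp ε s, z t⟫ ^ 2 ≤ ‖y s‖ ^ 2 + ⟪bvp ε s, z s⟫ ^ 2 := by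
      intro s hs1
      have d1 := dz s hs1
      have d2 := dy s hs1
      have key : ∀ a b : ℝ, |a - b| ≤ κ * n * ε → 1/2 * b ^ 2 - (κ * n * ε) ^ 2 ≤ a ^ 2 := by
        intro a b hab
        have := sq_le_sq' (abs_le.1 hab).1 (abs_le.1 hab).2
        nlinarith [sq_nonneg (2 * a - b)]
      have k1 := key ‖y s‖ ‖y t‖ ((abs_norm_sub_norm_le _ _).trans d2)
      have k2 := key ⟪bvp ε s, z s⟫ ⟪bvp ε s, z t⟫ (by
        rw [← inner_sub_right]
        exact (abs_inner_bvp_le _ _ _).trans d1)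
      linarith
    have := intervalIntegral.integral_mono_on hle
      (Continuous.intervalIntegrable (by fun_prop) _ _) iI pt
    rw [intervalIntegral.integral_add (Continuous.intervalIntegrable (by fun_prop) _ _)
      (Continuous.intervalIntegrable (by fun_prop) _ _), intervalIntegral.integral_const_mul,
      avg_sq hε, intervalIntegral.integral_const, smul_eq_mul] at this
    refine le_trans ?_ this
    have hmax : n ^ 2 ≤ ‖z t‖ ^ 2 + ‖y t‖ ^ 2 := by
      have : n = ‖z t‖ ∨ n = ‖y t‖ := max_choice _ _
      rcases this with e | e <;> rw [e] <;> nlinarith [sq_nonneg ‖z t‖, sq_nonneg ‖y t‖]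
    have hk : (κ * n * ε) ^ 2 ≤ n ^ 2 / 16 := by
      have h1 : κ * n * ε ≤ n / 4 := by nlinarith
      have := pow_le_pow_left₀ (by positivity) h1 2
      nlinarith
    have : n ^ 2 / 8 ≤ (1/2 * ‖y t‖ ^ 2 - 2 * (κ * n * ε) ^ 2) + 1/4 * ‖z t‖ ^ 2 := by
      nlinarith [sq_nonneg ‖y t‖]
    nlinarith
  have hDI : c * I ≤ ∫ s in t..(t + ε), Dis σ ε z y s := by
    rw [hI, ← intervalIntegral.integral_const_mul]
    exact intervalIntegral.integral_mono_on hle (iI.const_mul c)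
      (iiOn (Dis_cont h hs) ht (ht.trans hle)) hD
  have hV := V0_int h hs ht hle
  have hfin : 16 * L * κ * n ^ 2 * ε ^ 2 ≤ c / 2 * I := by
    have h1 : c / 2 * (ε * n ^ 2 / 8) ≤ c / 2 * I := mul_le_mul_of_nonneg_left hIlow (by positivity)
    have h2 : 256 * L * κ * ε * (ε * n ^ 2) ≤ c * (ε * n ^ 2) :=
      mul_le_mul_of_nonneg_right hεc (by positivity)
    nlinarith
  rw [hV]
  linarith

theorem lemB (h : SatC σ L M) {R : ℝ} (hR : 0 < R) : ∃ ε₂ > 0, ∃ C > 0, ∀ ε : ℝ, 0 < ε → ε < ε₂ →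
    ∀ z y : ℝ → E2, IsSolTeps σ ε z y → ∀ T₂, 0 ≤ T₂ → ‖z T₂‖ ≤ R → ‖y T₂‖ ≤ R →
    ∀ k : ℕ, k * ε ≤ 2 →
      V0 σ (z (T₂ + k * ε)) (y (T₂ + k * ε)) - V0 σ (z T₂) (y T₂) ≤
        -C * ∫ t in T₂..(T₂ + k * ε), (‖y t‖ ^ 2 + ⟪bvp ε t, z t⟫ ^ 2) := by
  have hL := h.Lpos
  have hM := h.Mpos
  obtain ⟨c, hc, Hc⟩ := Dis_lower h (R := 4 * R + 8 * M) (by positivity)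
  refine ⟨min (1 / (4 * (3 * (1 + L)))) (c / (256 * L * (3 * (1 + L)))), by positivity,
    c / 2, by positivity, ?_⟩
  intro ε hε hlt z y hs T₂ hT hz hy
  have h1 : 4 * (3 * (1 + L)) * ε ≤ 1 := by
    have := (hlt.trans_le (min_le_left _ _)).le
    rw [le_div_iff₀ (by positivity)] at this
    linarith
  have h2 : 256 * L * (3 * (1 + L)) * ε ≤ c := by
    have := (hlt.trans_le (min_le_right _ _)).le
    rw [le_div_iff₀ (by positivity)] at this
    linarith
  have by1 : ∀ s, T₂ ≤ s → s ≤ T₂ + 2 → ‖y s‖ ≤ R + 2 * M := by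
    intro s hs1 hs2
    have e1 := y_diff h hs hT hs1
    have e2 := norm_sub_norm_le (y s) (y T₂)
    nlinarith
  have bz1 : ∀ s, T₂ ≤ s → s ≤ T₂ + 2 → ‖z s‖ ≤ 3 * R + 6 * M := by
    intro s hs1 hs2
    have := norm_image_sub_le_of_norm_deriv_le_segment' (a := T₂) (b := T₂ + 2) (f := z)
      (C := R + 3 * M) (fun x hx => (hs x (hT.trans hx.1)).1.hasDerivWithinAt) (fun x hx => by
        refine (norm_sub_le _ _).trans ?_
        linarith [norm_u_le h ε x (z x), by1 x hx.1 hx.2.le]) s ⟨hs1, hs2⟩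
    have e2 := norm_sub_norm_le (z s) (z T₂)
    nlinarith
  have hIc : ContinuousOn (fun s => ‖y s‖ ^ 2 + ⟪bvp ε s, z s⟫ ^ 2) (Set.Ici 0) :=
    ((sol_conty hs).norm.pow 2).add (((continuous_bvp ε).continuousOn.inner (sol_contz hs)).pow 2)
  intro k
  induction k with
  | zero => intro _; simp
  | succ k ih =>
    intro hk
    push_cast at hk
    have hk' : k * ε ≤ 2 := by linarith
    have i1 := ih hk'
    have hn : 0 ≤ T₂ + k * ε := by positivity
    have hkn : (0:ℝ) ≤ k * ε := by positivity
    have st := local_period h hs hn hε hc h1 h2 (fun s ⟨hs1, hs2⟩ => by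
      have b1 := by1 s (by linarith) (by linarith)
      have b2 := bz1 s (by linarith) (by linarith)
      refine Hc ε z y s (by linarith) ?_
      refine (norm_sub_le _ _).trans ?_
      linarith)
    have e : T₂ + k * ε + ε = T₂ + (k + 1 : ℕ) * ε := by push_cast; ring
    rw [e] at st
    rw [← intervalIntegral.integral_add_adjacent_intervals (iiOn hIc hT hn)
      (iiOn hIc hn (show 0 ≤ T₂ + (k + 1 : ℕ) * ε by positivity))]
    linarith

end dyn

/-- Refined decay estimate for `(T_ε)`: for `ε` small, after some time `T₂`, the decrease
of `V₀` over any window of length `T ∈ [1/2, 2]` with `T/ε ∈ ℕ` dominates the `L²` norms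
of `y` and `b_εᵀ z`. -/
theorem stmt14 (σ : ℝ → ℝ) (hσ : IsSaturation σ) :
    ∃ ε₀ > 0, ∃ C > 0, ∀ ε : ℝ, 0 < ε → ε < ε₀ → ∀ z₀ y₀ : E2,
      ∃ T₂ : ℝ, 0 ≤ T₂ ∧
        ∀ T : ℝ, 1 / 2 ≤ T → T ≤ 2 → (∃ k : ℕ, T = k * ε) →
          ∀ z y : ℝ → E2, IsSolTeps σ ε z y → z 0 = z₀ → y 0 = y₀ →
            V0 σ (z (T₂ + T)) (y (T₂ + T)) - V0 σ (z T₂) (y T₂) ≤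
              -C * ∫ t in T₂..(T₂ + T), (‖y t‖ ^ 2 + ⟪bvp ε t, z t⟫ ^ 2) := by
  obtain ⟨L, M, h⟩ := hσ.satC
  obtain ⟨R, hR, ε₁, hε₁, HA⟩ := lemA h
  obtain ⟨ε₂, hε₂, C, hC, HB⟩ := lemB h hR
  refine ⟨min ε₁ ε₂, lt_min hε₁ hε₂, C, hC, ?_⟩
  intro ε hε hlt z₀ y₀
  by_cases hex : ∃ z y : ℝ → E2, IsSolTeps σ ε z y ∧ z 0 = z₀ ∧ y 0 = y₀
  · obtain ⟨z, y, hs, hz0, hy0⟩ := hex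
    obtain ⟨T₂, hT, hz, hy⟩ := HA ε hε (hlt.trans_le (min_le_left _ _)) z y hs
    refine ⟨T₂, hT, ?_⟩
    rintro T - hT2 ⟨k, rfl⟩ z' y' hs' hz0' hy0'
    obtain ⟨e1, e2⟩ := sol_unique h hs hs' (by rw [hz0, hz0']) (by rw [hy0, hy0']) hT
    exact HB ε hε (hlt.trans_le (min_le_right _ _)) z' y' hs' T₂ hT (by rw [e1]; exact hz)
      (by rw [e2]; exact hy) k hT2
  · refine ⟨0, le_rfl, ?_⟩
    intro T _ _ _ z y hs hz0 hy0
    exact absurd ⟨z, y, hs, hz0, hy0⟩ hex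
end
end

section
/- Let σ be a saturation function and S its associated modified saturation function. There exists a constant C>0 such that for every ξ ≥ 0 and every M ≥ 1, one has S'(Mξ) ≥ (C/M³)·S'(ξ). -/
open Real Filter MeasureTheory intervalIntegral RealInnerProductSpace

noncomputable section

lemma aux_int {g : ℝ → ℝ} (hg : Measurable g) {L : ℝ} (hL : ∀ x, |g x| ≤ L) {h k : ℝ → ℝ}
    (hh : Continuous h) (hk : Measurable k) (a b : ℝ) :
    IntervalIntegrable (fun v => h v * g (k v)) volume a b := by
  have h1 : IntervalIntegrable (fun v => g (k v)) volume a b := by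
    refine IntervalIntegrable.mono_fun' (g := fun _ => L) intervalIntegrable_const
      (hg.comp hk).aestronglyMeasurable ?_
    exact Filter.Eventually.of_forall fun x => hL _
  exact h1.continuousOn_mul hh.continuousOn

lemma aux_deriv_nonneg {f : ℝ → ℝ} (hf : Monotone f) (x : ℝ) : 0 ≤ deriv f x := by
  rw [← derivWithin_univ]
  exact (hf.monotoneOn Set.univ).derivWithin_nonneg

lemma aux_hasDeriv {σ : ℝ → ℝ} {L : NNReal} (hL : LipschitzWith L σ)
    (hd : DifferentiableOn ℝ σ (Set.Ioi 0)) {ξ : ℝ} (hξ : 0 < ξ) :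
    HasDerivAt (modSat σ) ((2 / Real.pi) *
      ∫ v in (0:ℝ)..(Real.pi / 2), (Real.sin v)^2 * deriv σ (ξ * Real.sin v)) ξ := by
  unfold modSat
  apply HasDerivAt.const_mul
  have hc := hL.continuous
  refine (intervalIntegral.hasDerivAt_integral_of_dominated_loc_of_lip
    (F := fun x v => Real.sin v * σ (x * Real.sin v)) (s := Set.univ) (bound := fun _ => (L:ℝ))
    Filter.univ_mem ?_ ?_ ?_ ?_ ?_ ?_).2
  · refine Filter.Eventually.of_forall fun x => Continuous.aestronglyMeasurable ?_
    fun_prop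
  · apply Continuous.intervalIntegrable
    fun_prop
  · have := measurable_deriv σ
    apply Measurable.aestronglyMeasurable
    fun_prop
  · refine Filter.Eventually.of_forall fun v _ => ?_
    apply LipschitzWith.lipschitzOnWith
    apply LipschitzWith.of_dist_le_mul
    intro x y
    have h1 := hL.dist_le_mul (x * Real.sin v) (y * Real.sin v)
    simp only [Real.dist_eq] at h1 ⊢
    rw [← mul_sub, abs_mul]
    rw [← sub_mul, abs_mul] at h1
    have h2 := Real.abs_sin_le_one v
    have h3 : (0:ℝ) ≤ L := L.2
    have h4 : ((Real.nnabs (L:ℝ) : NNReal) : ℝ) = L := by simp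
    rw [h4]
    calc |Real.sin v| * |σ (x * Real.sin v) - σ (y * Real.sin v)|
        ≤ 1 * (L * (|x - y| * 1)) := by
          gcongr
          refine h1.trans ?_
          gcongr
      _ = _ := by ring
  · exact intervalIntegrable_const
  · refine Filter.Eventually.of_forall fun v hv => ?_
    rw [Set.uIoc_of_le (by positivity)] at hv
    have hs : 0 < Real.sin v := Real.sin_pos_of_pos_of_lt_pi hv.1 (by linarith [hv.2, Real.pi_pos])
    have hp : 0 < ξ * Real.sin v := mul_pos hξ hs
    have h1 := (hd.differentiableAt (Ioi_mem_nhds hp)).hasDerivAt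
    have h2 : HasDerivAt (fun x : ℝ => x * Real.sin v) (Real.sin v) ξ := by
      simpa using (hasDerivAt_id ξ).mul_const (Real.sin v)
    have h3 := (h1.comp ξ h2).const_mul (Real.sin v)
    exact h3.congr_deriv (by ring)

lemma aux_upper {g : ℝ → ℝ} (hg : Measurable g) {L : ℝ} (hL : ∀ x, |g x| ≤ L) (h0 : ∀ x, 0 ≤ g x)
    (ha : AntitoneOn g (Set.Ioi 0)) {ξ : ℝ} (hξ : 0 < ξ) :
    ∫ v in (0:ℝ)..(π / 2), (Real.sin v)^2 * g (ξ * Real.sin v)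
      ≤ (π / 2)^3 * ∫ t in (0:ℝ)..1, t^2 * g (ξ * t) := by
  have hpi := Real.pi_pos
  have e : ∫ v in (0:ℝ)..(π / 2), v^2 * g (ξ * (2 / π * v))
      = (π / 2)^3 * ∫ t in (0:ℝ)..1, t^2 * g (ξ * t) := by
    have := intervalIntegral.integral_comp_mul_left (a := 0) (b := π / 2)
      (fun t => (π / 2)^2 * (t^2 * g (ξ * t))) (c := 2 / π) (by positivity)
    have e2 : 2 / π * (π / 2) = 1 := by field_simp
    rw [e2, mul_zero, smul_eq_mul] at this
    rw [show (π / 2)^3 = (2 / π)⁻¹ * (π / 2)^2 by field_simp, mul_assoc,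
      ← intervalIntegral.integral_const_mul, ← this]
    congr 1
    ext v
    field_simp
  rw [← e]
  refine intervalIntegral.integral_mono_on_of_le_Ioo (by positivity)
    (aux_int hg hL (by fun_prop) (by fun_prop) _ _)
    (aux_int hg hL (by fun_prop) (by fun_prop) _ _) ?_
  intro v hv
  have hs := Real.mul_le_sin hv.1.le hv.2.le
  have hq : 0 < 2 / π * v := mul_pos (by positivity) hv.1
  have hs2 := (Real.sin_lt hv.1).le
  have hm : g (ξ * Real.sin v) ≤ g (ξ * (2 / π * v)) :=
    ha (mul_pos hξ hq) (mul_pos hξ (hq.trans_le hs)) (by gcongr)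
  exact mul_le_mul (pow_le_pow_left₀ (hq.le.trans hs) hs2 2) hm (h0 _) (by positivity)

lemma aux_lower {g : ℝ → ℝ} (hg : Measurable g) {L : ℝ} (hL : ∀ x, |g x| ≤ L) (h0 : ∀ x, 0 ≤ g x)
    (ha : AntitoneOn g (Set.Ioi 0)) {ξ : ℝ} (hξ : 0 < ξ) :
    (2 / π)^2 * ∫ t in (0:ℝ)..1, t^2 * g (ξ * t) ≤
    ∫ v in (0:ℝ)..(π / 2), (Real.sin v)^2 * g (ξ * Real.sin v) := by
  have hpi := Real.pi_gt_three
  have h1 : ∫ t in (0:ℝ)..1, t^2 * g (ξ * t) ≤ ∫ t in (0:ℝ)..(π / 2), t^2 * g (ξ * t) := by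
    refine intervalIntegral.integral_mono_interval le_rfl zero_le_one (by linarith)
      (Filter.Eventually.of_forall fun x => mul_nonneg (by positivity) (h0 _))
      (aux_int hg hL (by fun_prop) (by fun_prop) _ _)
  refine (mul_le_mul_of_nonneg_left h1 (by positivity)).trans ?_
  rw [← intervalIntegral.integral_const_mul]
  refine intervalIntegral.integral_mono_on_of_le_Ioo (by positivity)
    ((aux_int hg hL (by fun_prop) (by fun_prop) _ _).const_mul _)
    (aux_int hg hL (by fun_prop) (by fun_prop) _ _) ?_
  intro v hv
  have hs := Real.mul_le_sin hv.1.le hv.2.le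
  have hq : 0 < 2 / π * v := mul_pos (by positivity) hv.1
  have hs2 := (Real.sin_lt hv.1).le
  have hm : g (ξ * v) ≤ g (ξ * Real.sin v) :=
    ha (mul_pos hξ (hq.trans_le hs)) (mul_pos hξ hv.1) (by gcongr)
  rw [← mul_assoc, ← mul_pow]
  exact mul_le_mul (pow_le_pow_left₀ hq.le hs 2) hm (h0 _) (by positivity)

lemma aux_scale {g : ℝ → ℝ} (hg : Measurable g) {L : ℝ} (hL : ∀ x, |g x| ≤ L) (h0 : ∀ x, 0 ≤ g x)
    {ξ M : ℝ} (hM : 1 ≤ M) :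
    (1 / M^3) * ∫ t in (0:ℝ)..1, t^2 * g (ξ * t) ≤ ∫ t in (0:ℝ)..1, t^2 * g (M * ξ * t) := by
  have hM0 : 0 < M := by linarith
  have h1 : ∫ t in (0:ℝ)..1, t^2 * g (ξ * t) ≤ ∫ t in (0:ℝ)..M, t^2 * g (ξ * t) := by
    refine intervalIntegral.integral_mono_interval le_rfl zero_le_one hM
      (Filter.Eventually.of_forall fun x => mul_nonneg (by positivity) (h0 _))
      (aux_int hg hL (by fun_prop) (by fun_prop) _ _)
  refine (mul_le_mul_of_nonneg_left h1 (by positivity)).trans (le_of_eq ?_)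
  have := intervalIntegral.integral_comp_mul_left (a := 0) (b := 1)
      (fun t => (1 / M^2) * (t^2 * g (ξ * t))) (c := M) hM0.ne'
  rw [mul_zero, mul_one, smul_eq_mul] at this
  rw [show 1 / M^3 = M⁻¹ * (1 / M^2) by field_simp, mul_assoc,
    ← intervalIntegral.integral_const_mul, ← this]
  congr 1
  ext v
  rw [show ξ * (M * v) = M * ξ * v by ring]
  field_simp

lemma aux_mono {σ : ℝ → ℝ} (hc : Continuous σ) (hm : Monotone σ) : Monotone (modSat σ) := by
  intro x y hxy
  have hpi := Real.pi_pos
  unfold modSat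
  refine mul_le_mul_of_nonneg_left ?_ (by positivity)
  refine intervalIntegral.integral_mono_on_of_le_Ioo (by positivity)
    (Continuous.intervalIntegrable (by fun_prop) _ _)
    (Continuous.intervalIntegrable (by fun_prop) _ _) ?_
  intro v hv
  have hs : 0 ≤ Real.sin v := Real.sin_nonneg_of_nonneg_of_le_pi hv.1.le (by linarith [hv.2])
  exact mul_le_mul_of_nonneg_left (hm (mul_le_mul_of_nonneg_right hxy hs)) hs

/-- There is `C > 0` with `S'(Mξ) ≥ (C/M³) S'(ξ)` for every `ξ ≥ 0` and `M ≥ 1`. -/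
theorem stmt19 (σ : ℝ → ℝ) (hσ : IsSaturation σ) :
    ∃ C > 0, ∀ ξ : ℝ, 0 ≤ ξ → ∀ M : ℝ, 1 ≤ M →
      C / M ^ 3 * deriv (modSat σ) ξ ≤ deriv (modSat σ) (M * ξ) := by
  obtain ⟨-, ⟨L, hL⟩, -, -, -, hm, hd, ha⟩ := hσ
  have hpi := Real.pi_gt_three
  refine ⟨(2 / π)^5, by positivity, ?_⟩
  intro ξ hξ M hM
  have hM0 : 0 < M := by linarith
  rcases hξ.eq_or_lt with h | h
  · subst h
    rw [mul_zero]
    have h1 : (2 / π)^5 / M^3 ≤ 1 := by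
      rw [div_le_one (by positivity)]
      have a1 : (2 / π)^5 ≤ 1 := pow_le_one₀ (by positivity) (by rw [div_le_one] <;> linarith)
      exact a1.trans (one_le_pow₀ hM)
    have h2 := aux_deriv_nonneg (aux_mono hL.continuous hm) 0
    exact mul_le_of_le_one_left h2 h1
  · rw [(aux_hasDeriv hL hd h).deriv, (aux_hasDeriv hL hd (mul_pos hM0 h)).deriv]
    have hg := measurable_deriv σ
    have hB : ∀ x, |deriv σ x| ≤ (L:ℝ) := fun x => norm_deriv_le_of_lipschitz hL
    have h0 := aux_deriv_nonneg hm
    have u := aux_upper hg hB h0 ha h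
    have l := aux_lower hg hB h0 ha (mul_pos hM0 h)
    have s := aux_scale hg hB h0 (ξ := ξ) hM
    set I := ∫ v in (0:ℝ)..(π / 2), (Real.sin v)^2 * deriv σ (ξ * Real.sin v)
    set J := ∫ t in (0:ℝ)..1, t^2 * deriv σ (ξ * t)
    calc (2 / π)^5 / M^3 * (2 / π * I) ≤ (2 / π)^5 / M^3 * (2 / π * ((π / 2)^3 * J)) := by gcongr
      _ = 2 / π * ((2 / π)^2 * (1 / M^3 * J)) := by field_simp
      _ ≤ 2 / π * ((2 / π)^2 * ∫ t in (0:ℝ)..1, t^2 * deriv σ (M * ξ * t)) := by gcongr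
      _ ≤ _ := by gcongr
end
end
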